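/- Let ψ_0, ψ ∈ 𝒮(ℝⁿ) satisfy the Tauberian conditions for some ε > 0. Let N > 0, let r = (r_1,…,r_n) with r_l > 0, and let τ > 0. Then there exists a constant C > 0 (depending only on N, r, τ, ψ_0, ψ, ε, a, n) such that for every f ∈ 𝒮′(ℝⁿ), every j ∈ ℕ₀ and every x ∈ ℝⁿ: (ψ_j^*f(x))^τ ≤ C · ∑_{k=j}^∞ 2^{(j−k)Nτ} ∫_{ℝⁿ} 2^{k|a|}·|ψ_k*f(z)|^τ / ∏_{l=1}^n (1+2^{ka_l}|x_l−z_l|)^{r_l τ} dz, both sides interpreted in [0,∞]. -/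

import Mathlib

open MeasureTheory Complex
open scoped ENNReal NNReal BigOperators

noncomputable section

/-- Points of `ℝⁿ`, written `x = (x 0, …, x (n-1))`. -/
abbrev RV (n : ℕ) := Fin n → ℝ

/-- Tempered distributions `𝒮′(ℝⁿ)`. -/
abbrev TD (n : ℕ) := SchwartzMap (RV n) ℂ →L[ℂ] ℂ

/-- The Fourier transform `𝓕g(ξ) = ∫ e^{-i x·ξ} g(x) dx`. -/
def FT (n : ℕ) (g : RV n → ℂ) (ξ : RV n) : ℂ :=
  ∫ x : RV n, Complex.exp (-Complex.I * ((∑ i, x i * ξ i : ℝ) : ℂ)) * g x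

/-- The partial derivative `∂_i`. -/
def pderiv1 (n : ℕ) (i : Fin n) (g : RV n → ℂ) : RV n → ℂ :=
  fun x => fderiv ℝ g x (Pi.single i 1)

def pderivIter (n : ℕ) (i : Fin n) : ℕ → (RV n → ℂ) → RV n → ℂ
  | 0, g => g
  | k + 1, g => pderiv1 n i (pderivIter n i k g)

/-- `D^α = (-i ∂_1)^{α_1} ⋯ (-i ∂_n)^{α_n}`. -/
def Dop (n : ℕ) (α : Fin n → ℕ) (g : RV n → ℂ) : RV n → ℂ :=
  fun x => (-Complex.I) ^ (∑ i, α i) *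
    ((List.finRange n).foldr (fun i h => pderivIter n i (α i) h) g) x

/-- `anorm` is the anisotropic distance function `|·|_a` :
`anorm 0 = 0`, and for `x ≠ 0`, `anorm x` is the (unique) `t > 0` with
`x 1 ^ 2 / t ^ (2 a 1) + … + x n ^ 2 / t ^ (2 a n) = 1`. -/
def IsAnorm (n : ℕ) (a : Fin n → ℝ) (anorm : RV n → ℝ) : Prop :=
  anorm 0 = 0 ∧
    ∀ x : RV n, x ≠ 0 → 0 < anorm x ∧ ∑ i, (x i : ℝ) ^ 2 / (anorm x) ^ (2 * a i) = 1

/-- Moment condition of order `M` : `D^α (𝓕ψ)(0) = 0` for all `|α| ≤ M` (void for `M = -1`). -/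
def MomentCond (n : ℕ) (M : ℤ) (ψ : RV n → ℂ) : Prop :=
  ∀ α : Fin n → ℕ, (∑ i, (α i : ℤ)) ≤ M → Dop n α (FT n ψ) 0 = 0

/-- Tauberian conditions for `ε > 0` for the pair `(ψ0, ψ)`. -/
def Tauber (n : ℕ) (anorm : RV n → ℝ) (ψ0 ψ : RV n → ℂ) (ε : ℝ) : Prop :=
  (∀ ξ, anorm ξ < 2 * ε → 0 < ‖FT n ψ0 ξ‖) ∧
    (∀ ξ, ε / 2 < anorm ξ → anorm ξ < 2 * ε → 0 < ‖FT n ψ ξ‖)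

/-- The family `φ_j`, `φ_0` at `j = 0` and `φ_j(x) = 2^{j|a|} φ(2^{ja}x)` for `j ≥ 1`. -/
def fam (n : ℕ) (a : Fin n → ℝ) (φ0 φ : RV n → ℂ) : ℕ → RV n → ℂ
  | 0 => φ0
  | j + 1 => fun x =>
      (((2 : ℝ) ^ (((j : ℝ) + 1) * ∑ i, a i) : ℝ) : ℂ) *
        φ (fun i => (2 : ℝ) ^ (((j : ℝ) + 1) * a i) * x i)

/-- Peetre–Fefferman–Stein maximal function attached to the function `F` (intended: `F = ψ_j * f`). -/
def pfs (n : ℕ) (a r : Fin n → ℝ) (F : RV n → ℂ) (j : ℕ) (x : RV n) : ℝ≥0∞ :=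
  ⨆ y : RV n,
    ENNReal.ofReal (‖F y‖ / ∏ l, (1 + (2 : ℝ) ^ ((j : ℝ) * a l) * |x l - y l|) ^ (r l))

/-- Iterated-integral construction of the mixed Lebesgue norm : integrate out the
coordinates one at a time, first `x 0`, last `x (n-1)`. -/
def mixAux (n : ℕ) (p : Fin n → ℝ≥0∞) : ℕ → ((RV n) → ℝ≥0∞) → (RV n) → ℝ≥0∞
  | 0, F => F
  | l + 1, F => fun x =>
      if h : l < n then
        (if p ⟨l, h⟩ = ∞ then
          essSup (fun t : ℝ => mixAux n p l F (Function.update x ⟨l, h⟩ t)) volume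
        else
          (∫⁻ t : ℝ, (mixAux n p l F (Function.update x ⟨l, h⟩ t)) ^ (p ⟨l, h⟩).toReal) ^
            (1 / (p ⟨l, h⟩).toReal))
      else mixAux n p l F x

/-- The mixed Lebesgue quasi-norm `‖F | L_{p̄}‖` of an extended-nonnegative-valued `F`. -/
def mixedNorm (n : ℕ) (p : Fin n → ℝ≥0∞) (F : RV n → ℝ≥0∞) : ℝ≥0∞ :=
  mixAux n p n F fun _ => 0

/-- `‖(u_k) | L_{p̄}(ℓ_q)‖`. -/
def seqNorm (n : ℕ) (p : Fin n → ℝ≥0∞) (q : ℝ≥0∞) (u : ℕ → RV n → ℝ≥0∞) : ℝ≥0∞ :=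
  mixedNorm n p fun x =>
    if q = ∞ then ⨆ k, u k x else (∑' k, u k x ^ q.toReal) ^ (1 / q.toReal)

/-- Convolution of (Schwartz) functions. -/
def conv2 (n : ℕ) (f g : RV n → ℂ) (x : RV n) : ℂ := ∫ y : RV n, f y * g (x - y)

/-- Schwartz seminorm `p_{α,β}(φ) = sup_x |x^α D^β φ(x)|`, valued in `[0,∞]`. -/
def pSemiE (n : ℕ) (α β : Fin n → ℕ) (g : RV n → ℂ) : ℝ≥0∞ :=
  ⨆ x : RV n, (‖((∏ i, x i ^ α i : ℝ) : ℂ) * Dop n β g x‖₊ : ℝ≥0∞)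

/-- Schwartz seminorm `q_{N,γ}(φ) = ∫ (1+|x|²)^{N/2} |D^γ φ(x)| dx`, valued in `[0,∞]`. -/
def qSemiE (n : ℕ) (N : ℝ) (γ : Fin n → ℕ) (g : RV n → ℂ) : ℝ≥0∞ :=
  ∫⁻ x : RV n, ENNReal.ofReal ((1 + ∑ i, (x i) ^ 2) ^ (N / 2)) * (‖Dop n γ g x‖₊ : ℝ≥0∞)

/-- Iterated Laplacian `Δ^N`. -/
def lapIter (n : ℕ) : ℕ → (RV n → ℂ) → RV n → ℂ
  | 0, g => g
  | N + 1, g => fun x => ∑ i, pderiv1 n i (pderiv1 n i (lapIter n N g)) x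

/-- The box `B_{R,j} = {ξ : |ξ_k| ≤ R 2^{j a_k}}`. -/
def specBox (n : ℕ) (a : Fin n → ℝ) (R : ℝ) (j : ℕ) : Set (RV n) :=
  {ξ | ∀ k, |ξ k| ≤ R * (2 : ℝ) ^ ((j : ℝ) * a k)}

/-- The spectral condition `supp 𝓕u ⊆ B_{R,j}` for a temperate-growth function `u`. -/
def SpecCond (n : ℕ) (a : Fin n → ℝ) (R : ℝ) (j : ℕ) (u : RV n → ℂ) : Prop :=
  ∀ φ : SchwartzMap (RV n) ℂ,
    tsupport (⇑φ) ∩ specBox n a R j = ∅ → (∫ x : RV n, u x * FT n (⇑φ) x) = 0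

/-- The maximal function `u^*` of Section 3. -/
def ustar (n : ℕ) (a r : Fin n → ℝ) (R : ℝ) (j : ℕ) (u : RV n → ℂ) (x : RV n) : ℝ≥0∞ :=
  ⨆ y : RV n,
    ENNReal.ofReal (‖u y‖ / ∏ l, (1 + R * (2 : ℝ) ^ ((j : ℝ) * a l) * |x l - y l|) ^ (r l))

set_option linter.unusedSectionVars false
namespace S14
open SchwartzMap

section AA
variable {V : Type*} [NormedAddCommGroup V] [NormedSpace ℝ V]

lemma smooth_cont (φ : 𝓢(V, ℂ)) (J : ℕ) : Continuous (fun x => iteratedFDeriv ℝ J φ x) :=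
  (φ.smooth (⊤:ℕ∞)).continuous_iteratedFDeriv (mod_cast le_top)

abbrev Dm (V : Type*) [NormedAddCommGroup V] (J : ℕ) := V × Metric.closedBall (0 : Fin J → V) 1

abbrev BC (V : Type*) [NormedAddCommGroup V] (J : ℕ) := BoundedContinuousFunction (Dm V J) ℂ

lemma Aaux (k J : ℕ) (φ : 𝓢(V, ℂ)) (p : Dm V J) :
    ‖(‖p.1‖^k:ℝ) • iteratedFDeriv ℝ J φ p.1 p.2.1‖ ≤ SchwartzMap.seminorm ℂ k J φ := by
  rw [norm_smul]
  have h1 : ‖p.2.1‖ ≤ 1 := mem_closedBall_zero_iff.1 p.2.2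
  have h2 : ‖iteratedFDeriv ℝ J φ p.1 p.2.1‖ ≤ ‖iteratedFDeriv ℝ J φ p.1‖ := by
    refine (ContinuousMultilinearMap.le_opNorm _ _).trans ?_
    refine mul_le_of_le_one_right (norm_nonneg _) ?_
    exact Finset.prod_le_one (fun _ _ => norm_nonneg _) (fun i _ => (norm_le_pi_norm _ i).trans h1)
  have := SchwartzMap.le_seminorm ℂ k J φ p.1
  refine le_trans ?_ this
  rw [norm_pow, norm_norm]
  gcongr

lemma Acont (k J : ℕ) (φ : 𝓢(V, ℂ)) :
    Continuous (fun p : Dm V J => (‖p.1‖^k:ℝ) • iteratedFDeriv ℝ J φ p.1 p.2.1) := by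
  refine (continuous_fst.norm.pow k).smul ?_
  exact Continuous.eval ((smooth_cont φ J).comp continuous_fst) (continuous_subtype_val.comp continuous_snd)

def Aop (k J : ℕ) : 𝓢(V, ℂ) →L[ℂ] BC V J :=
  mkCLMtoNormedSpace (D := V) (E := ℂ) (G := BC V J)
    (𝕜 := ℂ) (𝕜' := ℂ) (σ := RingHom.id ℂ) (fun φ =>
    BoundedContinuousFunction.ofNormedAddCommGroup
      (fun p : Dm V J => (‖p.1‖^k:ℝ) • iteratedFDeriv ℝ J φ p.1 p.2.1)
      (Acont k J φ) (SchwartzMap.seminorm ℂ k J φ) (Aaux k J φ))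
    (fun f g => by
      ext1 x
      have := iteratedFDeriv_add_apply (𝕜 := ℝ) (i := J) (x := x.1) (f := f) (g := g)
        (f.contDiffAt _) (g.contDiffAt _)
      simp only [BoundedContinuousFunction.coe_ofNormedAddCommGroup,
        BoundedContinuousFunction.coe_add, Pi.add_apply, ← smul_add]
      congr 1; exact congrArg (fun T => T x.2.1) this)
    (fun c f => by
      ext1 x
      have := iteratedFDeriv_const_smul_apply (𝕜 := ℝ) (i := J) (x := x.1) (f := f) (a := c)
        (f.contDiffAt _)
      simp only [BoundedContinuousFunction.coe_ofNormedAddCommGroup,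
        BoundedContinuousFunction.coe_smul, RingHom.id_apply]
      rw [smul_comm]; congr 1; exact congrArg (fun T => T x.2.1) this)
    ⟨{(k,J)}, 1, by norm_num, fun f => by
      simp only [Finset.sup_singleton, one_mul]
      exact BoundedContinuousFunction.norm_ofNormedAddCommGroup_le _ (apply_nonneg _ _) _⟩

lemma Aop_apply (k J : ℕ) (φ : 𝓢(V, ℂ)) (p : Dm V J) :
    Aop k J φ p = (‖p.1‖^k:ℝ) • iteratedFDeriv ℝ J φ p.1 p.2.1 := rfl

lemma Aop_le (k J : ℕ) (φ : 𝓢(V, ℂ)) : ‖Aop k J φ‖ ≤ SchwartzMap.seminorm ℂ k J φ :=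
  (BoundedContinuousFunction.norm_le (apply_nonneg _ _)).2 (Aaux k J φ)

lemma seminorm_le_Aop (k J : ℕ) (φ : 𝓢(V, ℂ)) : SchwartzMap.seminorm ℂ k J φ ≤ ‖Aop k J φ‖ := by
  refine SchwartzMap.seminorm_le_bound ℂ k J φ (norm_nonneg (Aop k J φ)) (fun x => ?_)
  by_cases hx : ‖x‖^k = 0
  · rw [hx, zero_mul]; exact norm_nonneg _
  have hx' : 0 < ‖x‖^k := lt_of_le_of_ne (by positivity) (Ne.symm hx)
  rw [← le_div_iff₀' hx']
  refine ContinuousMultilinearMap.opNorm_le_bound (div_nonneg (norm_nonneg _) hx'.le) (fun v => ?_)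
  let u : Fin J → V := fun i => ‖v i‖⁻¹ • v i
  have hv : v = fun i => ‖v i‖ • u i := by
    funext i
    by_cases h0 : v i = 0
    · simp [h0]
    · simp only [u, smul_smul]
      rw [mul_inv_cancel₀ (norm_ne_zero_iff.2 h0), one_smul]
  have hu : u ∈ Metric.closedBall (0 : Fin J → V) 1 := by
    rw [mem_closedBall_zero_iff, pi_norm_le_iff_of_nonneg zero_le_one]
    intro i
    simp only [u, norm_smul, norm_inv, norm_norm]
    exact inv_mul_le_one
  have h1 : ‖iteratedFDeriv ℝ J φ x v‖ = (∏ i, ‖v i‖) * ‖iteratedFDeriv ℝ J φ x u‖ := by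
    conv_lhs => rw [hv]
    rw [ContinuousMultilinearMap.map_smul_univ, norm_smul, Real.norm_of_nonneg]
    exact Finset.prod_nonneg fun i _ => norm_nonneg _
  have h2 := (Aop k J φ).norm_coe_le_norm (x, ⟨u, hu⟩)
  rw [Aop_apply, norm_smul, norm_pow, norm_norm] at h2
  rw [h1, mul_comm]
  gcongr
  rw [le_div_iff₀' hx']
  exact h2

/-- polynomial bound and continuity of translations -/
lemma trans_apply_iter (h : 𝓢(V, ℂ)) (J : ℕ) (z x : V) :
    iteratedFDeriv ℝ J (compSubConstCLM ℂ z h) x = iteratedFDeriv ℝ J h (x - z) := by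
  have : (⇑(compSubConstCLM ℂ z h)) = fun x => h (x - z) := rfl
  rw [this, iteratedFDeriv_comp_sub]

lemma pow_shift (k : ℕ) (x z : V) : ‖x‖^k ≤ (1+‖z‖)^k * (1 + ‖x - z‖)^k := by
  rw [← mul_pow]
  gcongr
  have : ‖x‖ ≤ ‖x - z‖ + ‖z‖ := by simpa using norm_add_le (x - z) z
  nlinarith [norm_nonneg z, norm_nonneg (x-z)]

lemma one_add_bound (h : 𝓢(V, ℂ)) (k J : ℕ) : ∃ C, 0 ≤ C ∧ ∀ x, (1+‖x‖)^k * ‖iteratedFDeriv ℝ J h x‖ ≤ C := by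
  refine ⟨_, ?_, fun x => SchwartzMap.one_add_le_sup_seminorm_apply (𝕜 := ℝ) (m := (k,J)) le_rfl le_rfl h x⟩
  positivity

lemma trans_bound (h : 𝓢(V, ℂ)) (k J : ℕ) : ∃ C, 0 ≤ C ∧ ∀ z,
    SchwartzMap.seminorm ℂ k J (compSubConstCLM ℂ z h) ≤ C * (1+‖z‖)^k := by
  obtain ⟨C, hC, hb⟩ := one_add_bound h k J
  refine ⟨C, hC, fun z => SchwartzMap.seminorm_le_bound ℂ k J _ (by positivity) fun x => ?_⟩
  rw [trans_apply_iter]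
  calc _ ≤ ((1+‖z‖)^k * (1 + ‖x - z‖)^k) * ‖iteratedFDeriv ℝ J h (x - z)‖ := by
        gcongr; exact pow_shift k x z
    _ = (1+‖z‖)^k * ((1 + ‖x - z‖)^k * ‖iteratedFDeriv ℝ J h (x - z)‖) := by ring
    _ ≤ (1+‖z‖)^k * C := by gcongr; exact hb _
    _ = _ := by ring

lemma trans_cont (h : 𝓢(V, ℂ)) : Continuous (fun z => compSubConstCLM ℂ z h) := by
  rw [continuous_iff_continuousAt]
  intro z₀
  rw [ContinuousAt, (schwartz_withSeminorms ℂ V ℂ).tendsto_nhds]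
  rintro ⟨k, J⟩ ε hε
  obtain ⟨C, hC, hb⟩ := one_add_bound h k (J+1)
  set B := C * (2+‖z₀‖)^k with hB
  have hB0 : 0 ≤ B := by positivity
  have : ∀ᶠ z in nhds z₀, ‖z - z₀‖ < min 1 (ε / (B+1)) := by
    have : Filter.Tendsto (fun z => ‖z - z₀‖) (nhds z₀) (nhds 0) := by
      have : Continuous (fun z => ‖z - z₀‖) := by fun_prop
      simpa using this.tendsto z₀
    exact this.eventually_lt_const (by positivity)
  filter_upwards [this] with z hz
  have h1 := hz.trans_le (min_le_left _ _)
  have h2 := hz.trans_le (min_le_right _ _)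
  refine lt_of_le_of_lt (b := B * ‖z - z₀‖) ?_ ?_
  · refine SchwartzMap.seminorm_le_bound ℂ k J _ (by positivity) fun x => ?_
    have e1 : iteratedFDeriv ℝ J (⇑(compSubConstCLM ℂ z h - compSubConstCLM ℂ z₀ h)) x
        = iteratedFDeriv ℝ J h (x - z) - iteratedFDeriv ℝ J h (x - z₀) := by
      rw [← trans_apply_iter, ← trans_apply_iter]
      exact iteratedFDeriv_sub_apply (𝕜 := ℝ) (SchwartzMap.contDiffAt _ _) (SchwartzMap.contDiffAt _ _)
    rw [e1]
    by_cases hx : ‖x‖^k = 0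
    · rw [hx, zero_mul]; positivity
    have hx' : 0 < ‖x‖^k := lt_of_le_of_ne (by positivity) (Ne.symm hx)
    have key : ‖iteratedFDeriv ℝ J h (x - z) - iteratedFDeriv ℝ J h (x - z₀)‖
        ≤ (B / ‖x‖^k) * ‖(x - z) - (x - z₀)‖ := by
      refine (convex_ball (x - z₀) 1).norm_image_sub_le_of_norm_fderiv_le (𝕜 := ℝ)
        (f := iteratedFDeriv ℝ J h) (C := B / ‖x‖^k) ?_ ?_ ?_ ?_
      · intro w hw
        exact ((h.smooth (⊤:ℕ∞)).differentiable_iteratedFDeriv (mod_cast WithTop.coe_lt_top J)) _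
      · intro w hw
        rw [norm_fderiv_iteratedFDeriv, le_div_iff₀ hx']
        have hw' : ‖x - w‖ ≤ 1 + ‖z₀‖ := by
          have h3 : ‖w - (x - z₀)‖ < 1 := by simpa [dist_eq_norm] using hw
          have := norm_sub_le z₀ (w - (x - z₀))
          rw [show z₀ - (w - (x - z₀)) = x - w by abel] at this
          linarith
        have hps := pow_shift k x (x - w)
        rw [show x - (x - w) = w by abel] at hps
        calc _ ≤ ‖iteratedFDeriv ℝ (J+1) h w‖ * ((1+‖x - w‖)^k * (1 + ‖w‖)^k) := by
              gcongr
          _ = (1+‖x - w‖)^k * ((1 + ‖w‖)^k * ‖iteratedFDeriv ℝ (J+1) h w‖) := by ring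
          _ ≤ (2+‖z₀‖)^k * C := by
              gcongr ?_^k * ?_
              · linarith
              · exact hb _
          _ = _ := by rw [hB]; ring
      · simp
      · simp only [Metric.mem_ball, dist_eq_norm]
        rw [show (x - z) - (x - z₀) = -(z - z₀) by abel, norm_neg]; exact h1
    rw [show (x - z) - (x - z₀) = -(z - z₀) by abel, norm_neg] at key
    calc _ ≤ ‖x‖^k * (B / ‖x‖^k * ‖z - z₀‖) := by gcongr
      _ = _ := by field_simp
  · rw [lt_div_iff₀ (by positivity)] at h2
    nlinarith [norm_nonneg (z - z₀)]

lemma func_bound (f : 𝓢(V, ℂ) →L[ℂ] ℂ) : ∃ (s : Finset (ℕ × ℕ)) (C : ℝ), 0 ≤ C ∧ ∀ φ,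
    ‖f φ‖ ≤ C * ∑ i ∈ s, SchwartzMap.seminorm ℂ i.1 i.2 φ := by
  have hq : Continuous ((normSeminorm ℂ ℂ).comp f.toLinearMap) := by
    exact continuous_norm.comp f.continuous
  obtain ⟨s, C, hC, h⟩ := Seminorm.bound_of_continuous (schwartz_withSeminorms ℂ V ℂ) _ hq
  refine ⟨s, C, C.2, fun φ => ?_⟩
  have h1 := h φ
  simp only [Seminorm.comp_apply, smul_apply] at h1
  refine le_trans h1 ?_
  change (C:ℝ) * _ ≤ _
  gcongr
  have := Seminorm.finset_sup_le_sum (schwartzSeminormFamily ℂ V ℂ) s φ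
  refine this.trans ?_
  rw [sum_apply]
  rfl
end AA
end S14

namespace S14
open SchwartzMap
open scoped FourierTransform LineDeriv

section EE
variable {V : Type*} [NormedAddCommGroup V] [InnerProductSpace ℝ V] [FiniteDimensional ℝ V]
  [MeasurableSpace V] [BorelSpace V]

def cv (κ h : 𝓢(V, ℂ)) : 𝓢(V, ℂ) := SchwartzMap.convolution (ContinuousLinearMap.mul ℂ ℂ) κ h

lemma cv_apply (κ h : 𝓢(V, ℂ)) (x : V) : cv κ h x = ∫ t, κ t * h (x - t) := by
  rw [cv, SchwartzMap.convolution_apply]; rfl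

lemma fourier_cv (κ h : 𝓢(V, ℂ)) (x : V) : 𝓕 (cv κ h) x = 𝓕 κ x * 𝓕 h x := by
  rw [cv, SchwartzMap.fourier_convolution]; rfl

lemma fourier_inj {g h : 𝓢(V, ℂ)} (H : ∀ x, 𝓕 g x = 𝓕 h x) : g = h := by
  have : 𝓕 g = 𝓕 h := by ext x; exact H x
  have := congrArg (fun u : 𝓢(V, ℂ) => (𝓕⁻ u : 𝓢(V, ℂ))) this
  simpa using this

lemma lineDeriv_cv (κ h : 𝓢(V, ℂ)) (m : V) : ∂_{m} (cv κ h) = cv κ (∂_{m} h) := by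
  apply fourier_inj
  intro x
  have : (inner ℝ · m : V → ℝ).HasTemperateGrowth := by fun_prop
  rw [fourier_cv, fourier_lineDerivOp_eq, fourier_lineDerivOp_eq]
  rw [smul_apply, smul_apply, smulLeftCLM_apply_apply this, smulLeftCLM_apply_apply this, fourier_cv]
  simp only [smul_eq_mul, Complex.real_smul]
  ring

lemma iterLineDeriv_cv (κ h : 𝓢(V, ℂ)) {J : ℕ} (m : Fin J → V) :
    ∂^{m} (cv κ h) = cv κ (∂^{m} h) := by
  induction J with
  | zero => simp
  | succ J ih => rw [LineDeriv.iteratedLineDerivOp_succ_left, LineDeriv.iteratedLineDerivOp_succ_left, ih, lineDeriv_cv]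

lemma factor {W : Type*} [AddCommGroup W] [Module ℂ W] {E : Type*} [NormedAddCommGroup E]
    [NormedSpace ℂ E] (f : W →ₗ[ℂ] ℂ) (A : W →ₗ[ℂ] E) (C : ℝ) (hA : ∀ φ, ‖f φ‖ ≤ C * ‖A φ‖) :
    ∃ F : E →L[ℂ] ℂ, ∀ φ, F (A φ) = f φ := by
  have hker : LinearMap.ker A ≤ LinearMap.ker f := by
    intro φ hφ
    have h0 : A φ = 0 := hφ
    have := hA φ
    rw [h0, norm_zero, mul_zero] at this
    exact norm_le_zero_iff.1 this
  let f1 : LinearMap.range A →ₗ[ℂ] ℂ :=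
    ((LinearMap.ker A).liftQ f hker) ∘ₗ (LinearMap.quotKerEquivRange A).symm.toLinearMap
  have hf1 : ∀ φ, f1 ⟨A φ, ⟨φ, rfl⟩⟩ = f φ := by
    intro φ
    have : (LinearMap.quotKerEquivRange A).symm ⟨A φ, ⟨φ, rfl⟩⟩
        = Submodule.Quotient.mk φ := by
      rw [LinearEquiv.symm_apply_eq]
      rfl
    simp only [f1, LinearMap.comp_apply, LinearEquiv.coe_coe]
    erw [this]
    rfl
  obtain ⟨F, hF, -⟩ := exists_extension_norm_eq (𝕜 := ℂ) (E := E) (LinearMap.range A)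
    (f1.mkContinuous C (by
      rintro ⟨_, φ, rfl⟩
      have := hA φ
      rw [← hf1 φ] at this
      exact this))
  exact ⟨F, fun φ => (hF ⟨A φ, ⟨φ, rfl⟩⟩).trans (hf1 φ)⟩

lemma int_trans {E : Type*} [NormedAddCommGroup E] [NormedSpace ℂ E] (A : 𝓢(V, ℂ) →L[ℂ] E)
    (κ h : 𝓢(V, ℂ)) (D : ℝ) (k : ℕ) (hb : ∀ t, ‖A (compSubConstCLM ℂ t h)‖ ≤ D * (1+‖t‖)^k) :
    Integrable (fun t => κ t • A (compSubConstCLM ℂ t h)) := by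
  have hcont : Continuous (fun t => A (compSubConstCLM ℂ t h)) := A.continuous.comp (trans_cont h)
  have h1 : Integrable (fun t => D * (2^k * (‖t‖^0 * ‖κ t‖ + ‖t‖^k * ‖κ t‖))) :=
    (((κ.integrable_pow_mul volume 0).add (κ.integrable_pow_mul volume k)).const_mul _).const_mul _
  have hD : 0 ≤ D := by
    have := (norm_nonneg _).trans (hb 0)
    simpa using this
  refine h1.mono' (κ.continuous.smul hcont).aestronglyMeasurable (Filter.Eventually.of_forall fun t => ?_)
  rw [norm_smul]
  have h2 : (1+‖t‖)^k ≤ 2^k * (1 + ‖t‖^k) := by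
    rcases le_total ‖t‖ 1 with h | h
    · calc (1+‖t‖)^k ≤ 2^k := by gcongr; linarith
        _ ≤ _ := by nlinarith [pow_nonneg (norm_nonneg t) k, pow_pos (two_pos (α := ℝ)) k]
    · calc (1+‖t‖)^k ≤ (2*‖t‖)^k := by gcongr; linarith
        _ = 2^k * ‖t‖^k := by rw [mul_pow]
        _ ≤ _ := by gcongr; linarith
  calc ‖κ t‖ * ‖A (compSubConstCLM ℂ t h)‖ ≤ ‖κ t‖ * (D * (2^k * (1 + ‖t‖^k))) := by
        gcongr; exact (hb t).trans (by gcongr)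
    _ = _ := by ring

lemma exch_A (k J : ℕ) (κ h : 𝓢(V, ℂ)) :
    Integrable (fun t => κ t • Aop k J (compSubConstCLM ℂ t h)) ∧
    Aop k J (cv κ h) = ∫ t, κ t • Aop k J (compSubConstCLM ℂ t h) := by
  obtain ⟨D, hD, hb⟩ := trans_bound h k J
  have hint : Integrable (fun t => κ t • Aop k J (compSubConstCLM ℂ t h)) := by
    exact int_trans _ κ h D k (fun t => ((Aop_le _ _ _).trans (hb t)))
  refine ⟨hint, ?_⟩
  ext p
  let ev : BC V J →L[ℂ] ℂ := BoundedContinuousFunction.evalCLM ℂ p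
  have h1 : ev (∫ t, κ t • Aop k J (compSubConstCLM ℂ t h)) = ∫ t, ev (κ t • Aop k J (compSubConstCLM ℂ t h)) :=
      (ContinuousLinearMap.integral_comp_comm ev hint).symm
  change _ = ev (∫ t, κ t • Aop k J (compSubConstCLM ℂ t h))
  rw [h1]
  have h2 : ∀ t, ev (κ t • Aop k J (compSubConstCLM ℂ t h)) = (‖p.1‖^k:ℝ) • (κ t * (∂^{p.2.1} h) (p.1 - t)) := by
    intro t
    have : ev (κ t • Aop k J (compSubConstCLM ℂ t h)) = κ t • ((‖p.1‖^k:ℝ) • iteratedFDeriv ℝ J (compSubConstCLM ℂ t h) p.1 p.2.1) := rfl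
    rw [this, trans_apply_iter, ← SchwartzMap.iteratedLineDerivOp_eq_iteratedFDeriv, smul_comm]
    rfl
  simp_rw [h2]
  rw [integral_smul, ← cv_apply, ← iterLineDeriv_cv, SchwartzMap.iteratedLineDerivOp_eq_iteratedFDeriv]
  rfl

theorem exchange (f : 𝓢(V, ℂ) →L[ℂ] ℂ) (κ h : 𝓢(V, ℂ)) :
    f (cv κ h) = ∫ t, κ t * f (compSubConstCLM ℂ t h) := by
  obtain ⟨s, C, hC, hf⟩ := func_bound f
  let A : 𝓢(V, ℂ) →L[ℂ] ((i : s) → BC V i.1.2) :=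
    ContinuousLinearMap.pi (fun i : s => Aop i.1.1 i.1.2)
  have hA : ∀ φ, ‖f φ‖ ≤ (C * s.card) * ‖A φ‖ := by
    intro φ
    refine (hf φ).trans ?_
    rw [mul_assoc]
    gcongr
    rw [← nsmul_eq_mul]
    refine Finset.sum_le_card_nsmul _ _ _ (fun i hi => ?_)
    exact (seminorm_le_Aop _ _ φ).trans (norm_le_pi_norm (A φ) ⟨i, hi⟩)
  obtain ⟨F, hF⟩ := factor f.toLinearMap A.toLinearMap _ hA
  have hint : Integrable (fun t => κ t • A (compSubConstCLM ℂ t h)) :=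
    Integrable.of_eval (fun i : s => (exch_A i.1.1 i.1.2 κ h).1)
  have key : A (cv κ h) = ∫ t, κ t • A (compSubConstCLM ℂ t h) := by
    funext i
    have := eval_integral (f := fun t => κ t • A (compSubConstCLM ℂ t h)) (μ := volume)
      (fun i : s => (exch_A i.1.1 i.1.2 κ h).1) i
    rw [this]
    exact (exch_A i.1.1 i.1.2 κ h).2
  have h2 : f (cv κ h) = F (A (cv κ h)) := (hF _).symm
  rw [h2, key, ← F.integral_comp_comm hint]
  refine integral_congr_ae (Filter.Eventually.of_forall fun t => ?_)
  have := hF (compSubConstCLM ℂ t h)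
  simp only [map_smul, smul_eq_mul]
  congr 1
end EE
end S14

namespace S14
open SchwartzMap

section BB
variable {V : Type*} [NormedAddCommGroup V] [NormedSpace ℝ V]

lemma comp_bd {u : V → ℂ} (hu : ContDiff ℝ (⊤:ℕ∞) u) (T : V →L[ℝ] V) {q : ℝ} (hq0 : 0 ≤ q)
    (hq : q ≤ 1) (hT : ∀ x, ‖T x‖ ≤ q * ‖x‖) (J : ℕ) (x : V) :
    ‖iteratedFDeriv ℝ J (u ∘ T) x‖ ≤ ‖iteratedFDeriv ℝ J u (T x)‖ := by
  rw [T.iteratedFDeriv_comp_right hu x (i := J) (mod_cast le_top)]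
  refine (ContinuousMultilinearMap.norm_compContinuousLinearMap_le _ _).trans ?_
  refine mul_le_of_le_one_right (norm_nonneg _) ?_
  refine Finset.prod_le_one (fun _ _ => norm_nonneg _) (fun _ _ => ?_)
  exact (T.opNorm_le_bound hq0 hT).trans hq

lemma keyB {u : V → ℂ} (hu : ContDiff ℝ (⊤:ℕ∞) u) (hbd : ∀ J : ℕ, ∃ C, ∀ x, ‖iteratedFDeriv ℝ J u x‖ ≤ C)
    {δ : ℝ} (hδ : 0 < δ) (hu0 : ∀ x, ‖x‖ < δ → u x = 0) (g : 𝓢(V, ℂ)) (K J L : ℕ) :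
    ∃ C, 0 ≤ C ∧ ∀ (T : V →L[ℝ] V) (q : ℝ), 0 ≤ q → q ≤ 1 → (∀ x, ‖T x‖ ≤ q * ‖x‖) →
      ∀ G : 𝓢(V, ℂ), (∀ x, G x = u (T x) * g x) → SchwartzMap.seminorm ℂ K J G ≤ C * q^L := by
  choose D hD using hbd
  have hD0 : ∀ J, 0 ≤ D J := fun J => (norm_nonneg _).trans (hD J 0)
  refine ⟨∑ i ∈ Finset.range (J+1), (J.choose i : ℝ) * D i * (SchwartzMap.seminorm ℂ (K+L) (J-i) g * (1/δ)^L),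
    Finset.sum_nonneg fun i _ => mul_nonneg (mul_nonneg (by positivity) (hD0 i)) (mul_nonneg (apply_nonneg _ _) (by positivity)), ?_⟩
  intro T q hq0 hq hT G hG
  refine SchwartzMap.seminorm_le_bound ℂ K J G (mul_nonneg (Finset.sum_nonneg fun i _ => mul_nonneg (mul_nonneg (by positivity) (hD0 i)) (mul_nonneg (apply_nonneg _ _) (by positivity))) (by positivity)) (fun x => ?_)
  have hGe : (⇑G) = fun x => (u ∘ T) x * g x := funext hG
  rcases lt_or_ge ‖T x‖ δ with hx | hx
  · have : (⇑G) =ᶠ[nhds x] fun _ => 0 := by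
      have : ∀ᶠ y in nhds x, ‖T y‖ < δ :=
        (T.continuous.norm.tendsto x).eventually_lt_const hx
      filter_upwards [this] with y hy
      rw [hG, hu0 _ hy, zero_mul]
    rw [(this.iteratedFDeriv ℝ J).eq_of_nhds]
    have : iteratedFDeriv ℝ J (fun _ : V => (0:ℂ)) = 0 := iteratedFDeriv_fun_zero
    rw [this]
    simp only [Pi.zero_apply, norm_zero, mul_zero]
    exact (mul_nonneg (Finset.sum_nonneg fun i _ => mul_nonneg (mul_nonneg (by positivity) (hD0 i)) (mul_nonneg (apply_nonneg _ _) (by positivity))) (by positivity))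
  · have hx1 : 1 ≤ (1/δ)^L * q^L * ‖x‖^L := by
      rw [← mul_pow, ← mul_pow]
      apply one_le_pow₀
      have := hx.trans (hT x)
      rw [one_div, mul_assoc, ← div_eq_inv_mul, le_div_iff₀ hδ]
      linarith
    have h1 : ‖iteratedFDeriv ℝ J G x‖ ≤ ∑ i ∈ Finset.range (J+1), (J.choose i : ℝ) * ‖iteratedFDeriv ℝ i (u ∘ T) x‖ * ‖iteratedFDeriv ℝ (J-i) g x‖ := by
      rw [hGe]
      exact norm_iteratedFDeriv_mul_le (N := ((⊤:ℕ∞):WithTop ℕ∞)) (hu.comp T.contDiff) (g.smooth (⊤:ℕ∞)) x (mod_cast le_top)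
    calc ‖x‖^K * ‖iteratedFDeriv ℝ J G x‖ ≤ ‖x‖^K * ∑ i ∈ Finset.range (J+1), (J.choose i : ℝ) * D i * ‖iteratedFDeriv ℝ (J-i) g x‖ := by
          gcongr
          refine h1.trans ?_
          gcongr with i hi
          exact (comp_bd hu T hq0 hq hT i x).trans (hD i _)
      _ ≤ (‖x‖^K * ∑ i ∈ Finset.range (J+1), (J.choose i : ℝ) * D i * ‖iteratedFDeriv ℝ (J-i) g x‖) * ((1/δ)^L * q^L * ‖x‖^L) := by
          refine le_mul_of_one_le_right (mul_nonneg (by positivity) (Finset.sum_nonneg fun i _ => ?_)) hx1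
          exact mul_nonneg (mul_nonneg (by positivity) (hD0 i)) (norm_nonneg _)
      _ = ∑ i ∈ Finset.range (J+1), (J.choose i : ℝ) * D i * ((‖x‖^(K+L) * ‖iteratedFDeriv ℝ (J-i) g x‖) * (1/δ)^L) * q^L := by
          rw [Finset.mul_sum, Finset.sum_mul]
          refine Finset.sum_congr rfl fun i _ => ?_
          rw [pow_add]; ring
      _ ≤ _ := by
          rw [Finset.sum_mul]
          gcongr with i hi
          · have := hD0 i; positivity
          · exact SchwartzMap.le_seminorm ℂ (K+L) (J-i) g x

lemma bdd_of_cs {u : V → ℂ} (hu : ContDiff ℝ (⊤:ℕ∞) u) (hc : HasCompactSupport u) (J : ℕ) :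
    ∃ C, ∀ x, ‖iteratedFDeriv ℝ J u x‖ ≤ C := by
  have h1 : Continuous (iteratedFDeriv ℝ J u) := hu.continuous_iteratedFDeriv (mod_cast le_top)
  exact (hc.iteratedFDeriv J).exists_bound_of_continuous h1

lemma bdd_one_sub {u : V → ℂ} (hu : ContDiff ℝ (⊤:ℕ∞) u) (hc : HasCompactSupport u) (J : ℕ) :
    ∃ C, ∀ x, ‖iteratedFDeriv ℝ J (fun x => 1 - u x) x‖ ≤ C := by
  obtain ⟨C, hC⟩ := bdd_of_cs hu hc J
  refine ⟨1 + C, fun x => ?_⟩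
  have : iteratedFDeriv ℝ J (fun x => 1 - u x) x = iteratedFDeriv ℝ J (fun _ => (1:ℂ)) x - iteratedFDeriv ℝ J u x :=
    iteratedFDeriv_sub_apply (𝕜 := ℝ) contDiffAt_const ((hu.of_le (mod_cast le_top)).contDiffAt)
  rw [this]
  refine (norm_sub_le _ _).trans (add_le_add ?_ (hC x))
  rcases Nat.eq_zero_or_pos J with rfl | hJ
  · simp
  · rw [iteratedFDeriv_const_of_ne hJ.ne']; simp

lemma temp_comp {u : V → ℂ} (hu : ContDiff ℝ (⊤:ℕ∞) u) (hbd : ∀ J : ℕ, ∃ C, ∀ x, ‖iteratedFDeriv ℝ J u x‖ ≤ C)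
    (T : V →L[ℝ] V) {q : ℝ} (hq0 : 0 ≤ q)
    (hq : q ≤ 1) (hT : ∀ x, ‖T x‖ ≤ q * ‖x‖) : (fun x => u (T x)).HasTemperateGrowth := by
  refine ⟨hu.comp T.contDiff, fun J => ?_⟩
  obtain ⟨C, hC⟩ := hbd J
  exact ⟨0, C, fun x => by rw [pow_zero, mul_one]; exact (comp_bd hu T hq0 hq hT J x).trans (hC _)⟩
end BB
end S14

set_option linter.unusedSectionVars false
namespace S14
open SchwartzMap
open scoped FourierTransform LineDeriv

section CC
variable {V : Type*} [NormedAddCommGroup V] [InnerProductSpace ℝ V] [FiniteDimensional ℝ V]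
  [MeasurableSpace V] [BorelSpace V]

def Rr (y : V) : 𝓢(V, ℂ) →L[ℂ] 𝓢(V, ℂ) :=
  (compSubConstCLM ℂ y).comp (compCLMOfContinuousLinearEquiv ℂ (ContinuousLinearEquiv.neg ℝ))

lemma Rr_apply (y : V) (φ : 𝓢(V, ℂ)) (x : V) : Rr y φ x = φ (y - x) := by
  have : Rr y φ x = φ (-(x - y)) := rfl
  rw [this, neg_sub]

lemma Rr_trans (y t : V) (φ : 𝓢(V, ℂ)) : Rr y (compSubConstCLM ℂ t φ) = Rr (y - t) φ := by
  ext x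
  rw [Rr_apply, Rr_apply, compSubConstCLM_apply]
  congr 1; abel

lemma conv_est (f : 𝓢(V, ℂ) →L[ℂ] ℂ) (κ h : 𝓢(V, ℂ)) (y : V) :
    ‖f (Rr y (cv κ h))‖ₑ ≤ ∫⁻ z, ‖κ (y - z)‖ₑ * ‖f (Rr z h)‖ₑ := by
  have h1 := exchange (f.comp (Rr y)) κ h
  simp only [ContinuousLinearMap.comp_apply, Rr_trans] at h1
  rw [h1]
  refine (enorm_integral_le_lintegral_enorm _).trans (le_of_eq ?_)
  rw [← lintegral_sub_left_eq_self _ y]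
  refine lintegral_congr fun z => ?_
  rw [enorm_mul, sub_sub_cancel]

lemma ker_bd (M : ℕ) : ∃ (s : Finset (ℕ × ℕ)) (C : ℝ), 0 ≤ C ∧ ∀ (G : 𝓢(V, ℂ)) (x : V),
    (1+‖x‖)^M * ‖(𝓕⁻ G : 𝓢(V, ℂ)) x‖ ≤ C * ∑ i ∈ s, SchwartzMap.seminorm ℂ i.1 i.2 G := by
  let p : Seminorm ℂ 𝓢(V, ℂ) := (Finset.Iic (M, 0)).sup fun m => SchwartzMap.seminorm ℂ m.1 m.2
  have hp : Continuous p := by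
    apply Seminorm.continuous_of_le (q := ∑ m ∈ Finset.Iic (M, 0), SchwartzMap.seminorm ℂ m.1 m.2)
    · have : ⇑(∑ m ∈ Finset.Iic (M, 0), SchwartzMap.seminorm (F := ℂ) (E := V) ℂ m.1 m.2) = fun φ => ∑ m ∈ Finset.Iic (M, 0), SchwartzMap.seminorm ℂ m.1 m.2 φ := by
        ext φ; rw [sum_apply]
      rw [this]
      exact continuous_finsetSum _ fun m _ => (schwartz_withSeminorms ℂ V ℂ).continuous_seminorm m
    · exact Seminorm.finset_sup_le_sum _ _
  have hq : Continuous (p.comp (FourierTransform.fourierCLE ℂ 𝓢(V, ℂ)).symm.toContinuousLinearMap.toLinearMap) := by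
    exact hp.comp (FourierTransform.fourierCLE ℂ 𝓢(V, ℂ)).symm.continuous
  obtain ⟨s, C, hC, h⟩ := Seminorm.bound_of_continuous (schwartz_withSeminorms ℂ V ℂ) _ hq
  refine ⟨s, 2^M * C, by positivity, fun G x => ?_⟩
  have h1 := h G
  simp only [Seminorm.comp_apply, smul_apply] at h1
  have h2 := SchwartzMap.one_add_le_sup_seminorm_apply (𝕜 := ℂ) (m := (M,0)) (k := M) (n := 0) le_rfl le_rfl (𝓕⁻ G : 𝓢(V, ℂ)) x
  rw [norm_iteratedFDeriv_zero] at h2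
  refine h2.trans ?_
  rw [mul_assoc]
  refine mul_le_mul_of_nonneg_left ?_ (by positivity)
  refine le_trans h1 ?_
  change (C:ℝ) * _ ≤ _
  gcongr
  have := Seminorm.finset_sup_le_sum (schwartzSeminormFamily ℂ V ℂ) s G
  refine this.trans ?_
  rw [sum_apply]
  rfl

lemma ker_bd' {u : V → ℂ} (hu : ContDiff ℝ (⊤:ℕ∞) u) (hbd : ∀ J : ℕ, ∃ C, ∀ x, ‖iteratedFDeriv ℝ J u x‖ ≤ C)
    {δ : ℝ} (hδ : 0 < δ) (hu0 : ∀ x, ‖x‖ < δ → u x = 0) (g : 𝓢(V, ℂ)) (M L : ℕ) :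
    ∃ C, 0 ≤ C ∧ ∀ (T : V →L[ℝ] V) (q : ℝ), 0 ≤ q → q ≤ 1 → (∀ x, ‖T x‖ ≤ q * ‖x‖) →
      ∀ G : 𝓢(V, ℂ), (∀ x, G x = u (T x) * g x) → ∀ x,
        (1+‖x‖)^M * ‖(𝓕⁻ G : 𝓢(V, ℂ)) x‖ ≤ C * q^L := by
  obtain ⟨s, C, hC, h⟩ := ker_bd (V := V) M
  choose D hD0 hD using fun i : ℕ × ℕ => keyB hu hbd hδ hu0 g i.1 i.2 L
  refine ⟨C * ∑ i ∈ s, D i, mul_nonneg hC (Finset.sum_nonneg fun i _ => hD0 i), ?_⟩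
  intro T q hq0 hq hT G hG x
  refine (h G x).trans ?_
  rw [mul_assoc, Finset.sum_mul]
  gcongr with i hi
  exact hD i T q hq0 hq hT G hG

lemma rem_bd (f : 𝓢(V, ℂ) →L[ℂ] ℂ) {u : V → ℂ} (hu : ContDiff ℝ (⊤:ℕ∞) u) (hbd : ∀ J : ℕ, ∃ C, ∀ x, ‖iteratedFDeriv ℝ J u x‖ ≤ C)
    {δ : ℝ} (hδ : 0 < δ) (hu0 : ∀ x, ‖x‖ < δ → u x = 0) (g : 𝓢(V, ℂ)) :
    ∃ C, 0 ≤ C ∧ ∀ (T : V →L[ℝ] V) (q : ℝ), 0 ≤ q → q ≤ 1 → (∀ x, ‖T x‖ ≤ q * ‖x‖) →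
      ∀ G : 𝓢(V, ℂ), (∀ x, G x = u (T x) * g x) → ‖f (𝓕⁻ G : 𝓢(V, ℂ))‖ ≤ C * q := by
  obtain ⟨s, C, hC, h⟩ := func_bound (f.comp ((FourierTransform.fourierCLE ℂ 𝓢(V, ℂ)).symm.toContinuousLinearMap))
  choose D hD0 hD using fun i : ℕ × ℕ => keyB hu hbd hδ hu0 g i.1 i.2 1
  refine ⟨C * ∑ i ∈ s, D i, mul_nonneg hC (Finset.sum_nonneg fun i _ => hD0 i), ?_⟩
  intro T q hq0 hq hT G hG
  refine (h G).trans ?_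
  rw [mul_assoc, Finset.sum_mul]
  gcongr with i hi
  simpa using hD i T q hq0 hq hT G hG

lemma enorm_bd {t C : ℝ} {M : ℕ} {c : ℂ} (ht : 0 ≤ t) (h : (1+t)^M * ‖c‖ ≤ C) :
    ‖c‖ₑ ≤ ENNReal.ofReal C * ENNReal.ofReal (((1+t)^M)⁻¹) := by
  have hp : 0 < (1+t)^M := by positivity
  have hC : 0 ≤ C := le_trans (by positivity) h
  rw [← ENNReal.ofReal_mul hC, ← ofReal_norm]
  apply ENNReal.ofReal_le_ofReal
  rw [← div_eq_mul_inv, le_div_iff₀ hp]; linarith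

theorem thmA (T : ℕ → V →L[ℝ] V) (hT0 : ∀ x, T 0 x = x) (hT : ∀ m x, ‖T m x‖ ≤ (1/2)^m * ‖x‖)
    {Φ lam : V → ℂ} (hΦ : ContDiff ℝ (⊤:ℕ∞) Φ) (hΦc : HasCompactSupport Φ)
    (hl : ContDiff ℝ (⊤:ℕ∞) lam) (hlc : HasCompactSupport lam) {δ : ℝ} (hδ : 0 < δ)
    (hΦ1 : ∀ x, ‖x‖ < δ → Φ x = 1) (hl0 : ∀ x, ‖x‖ < δ → lam x = 0)
    (G : ℕ → 𝓢(V, ℂ))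
    (hG : ∀ m x, lam (T (m+1) x) * 𝓕 (G (m+1)) x = Φ (T (m+1) x) - Φ (T m x)) (L M : ℕ) :
    ∃ C : ℝ, 0 ≤ C ∧ ∀ (f : 𝓢(V, ℂ) →L[ℂ] ℂ) (y : V), ‖f (Rr y (G 0))‖ₑ ≤ ENNReal.ofReal C *
      ∑' m : ℕ, ENNReal.ofReal (((1/2)^m)^L) *
        ∫⁻ z, ‖f (Rr z (G m))‖ₑ * ENNReal.ofReal (((1+‖y-z‖)^M)⁻¹) := by
  have hbl := bdd_of_cs hl hlc
  have hbΦ := bdd_one_sub hΦ hΦc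
  have hq0 : ∀ m : ℕ, (0:ℝ) ≤ (1/2)^m := fun m => by positivity
  have hq1 : ∀ m : ℕ, ((1:ℝ)/2)^m ≤ 1 := fun m => pow_le_one₀ (by norm_num) (by norm_num)
  have htl : ∀ m, (fun x => lam (T m x)).HasTemperateGrowth := fun m => temp_comp hl hbl (T m) (hq0 m) (hq1 m) (hT m)
  have h1Φ : ContDiff ℝ (⊤:ℕ∞) (fun x => 1 - Φ x) := contDiff_const.sub hΦ
  have htΦ : ∀ m, (fun x => 1 - Φ (T m x)).HasTemperateGrowth := fun m => temp_comp h1Φ hbΦ (T m) (hq0 m) (hq1 m) (hT m)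
  have h1Φ0 : ∀ x, ‖x‖ < δ → 1 - Φ x = 0 := fun x hx => by rw [hΦ1 x hx, sub_self]
  let P : ℕ → 𝓢(V, ℂ) := fun m => match m with
    | 0 => hΦc.toSchwartzMap hΦ
    | (m+1) => smulLeftCLM ℂ (fun x => lam (T (m+1) x)) (𝓕 (G 0))
  have hP0 : ∀ x, P 0 x = Φ x := fun x => rfl
  have hPm : ∀ m x, P (m+1) x = lam (T (m+1) x) * 𝓕 (G 0) x := fun m x => by
    change (smulLeftCLM ℂ (fun x => lam (T (m+1) x)) (𝓕 (G 0))) x = _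
    rw [smulLeftCLM_apply_apply (htl _)]; rfl
  let Q : ℕ → 𝓢(V, ℂ) := fun m => smulLeftCLM ℂ (fun x => 1 - Φ (T m x)) (𝓕 (G 0))
  have hQ : ∀ m x, Q m x = (1 - Φ (T m x)) * 𝓕 (G 0) x := fun m x => by
    change (smulLeftCLM ℂ (fun x => 1 - Φ (T m x)) (𝓕 (G 0))) x = _
    rw [smulLeftCLM_apply_apply (htΦ _)]; rfl
  have dec : ∀ K, G 0 = (∑ m ∈ Finset.range (K+1), cv (𝓕⁻ (P m)) (G m)) + 𝓕⁻ (Q K) := by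
    intro K
    apply fourier_inj
    intro x
    have e1 : 𝓕 ((∑ m ∈ Finset.range (K+1), cv (𝓕⁻ (P m)) (G m)) + 𝓕⁻ (Q K))
        = (∑ m ∈ Finset.range (K+1), 𝓕 (cv (𝓕⁻ (P m)) (G m))) + Q K := by
      have : ∀ g : 𝓢(V, ℂ), 𝓕 g = FourierTransform.fourierCLE ℂ 𝓢(V, ℂ) g := fun g => rfl
      rw [this, map_add, map_sum]
      simp only [← this, FourierTransform.fourier_fourierInv_eq]
    rw [e1, add_apply, sum_apply]; clear e1
    have e2 : ∀ m, 𝓕 (cv (𝓕⁻ (P m)) (G m)) x = P m x * 𝓕 (G m) x := fun m => by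
      rw [fourier_cv, FourierTransform.fourier_fourierInv_eq]
    simp only [e2, hQ]
    have e3 : ∑ m ∈ Finset.range (K+1), P m x * 𝓕 (G m) x = Φ (T K x) * 𝓕 (G 0) x := by
      induction K with
      | zero => simp [hP0, hT0]
      | succ K ih => rw [Finset.sum_range_succ, ih, hPm, mul_right_comm, hG]; ring
    rw [e3]; ring
  obtain ⟨s, C0, hC0, h0⟩ := ker_bd (V := V) M
  obtain ⟨C1, hC1, h1⟩ := ker_bd' hl hbl hδ hl0 (𝓕 (G 0)) M L
  set C2 := C0 * ∑ i ∈ s, SchwartzMap.seminorm ℂ i.1 i.2 (P 0) with hC2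
  have hC2' : 0 ≤ C2 := mul_nonneg hC0 (Finset.sum_nonneg fun i _ => apply_nonneg _ _)
  have hk : ∀ m x, (1+‖x‖)^M * ‖(𝓕⁻ (P m) : 𝓢(V, ℂ)) x‖ ≤ (C1 + C2) * ((1/2)^m)^L := by
    intro m x
    cases m with
    | zero =>
      refine (h0 (P 0) x).trans ?_
      simp only [pow_zero, one_pow, mul_one]
      linarith
    | succ m =>
      refine (h1 (T (m+1)) _ (hq0 _) (hq1 _) (hT _) _ (hPm m) x).trans ?_
      gcongr; linarith
  refine ⟨C1 + C2, by positivity, fun f y => ?_⟩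
  set S := ∑' m : ℕ, ENNReal.ofReal (((1/2)^m)^L) *
        ∫⁻ z, ‖f (Rr z (G m))‖ₑ * ENNReal.ofReal (((1+‖y-z‖)^M)⁻¹) with hS
  obtain ⟨D, hD0, hD⟩ := rem_bd (f.comp (Rr y)) h1Φ hbΦ hδ h1Φ0 (𝓕 (G 0))
  have main : ∀ K : ℕ, ‖f (Rr y (G 0))‖ₑ ≤ ENNReal.ofReal (C1+C2) * S + ENNReal.ofReal (D * (1/2)^K) := by
    intro K
    conv_lhs => rw [dec K]
    rw [map_add, map_add, map_sum, map_sum]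
    refine (enorm_add_le _ _).trans (add_le_add ?_ ?_)
    · refine (enorm_sum_le _ _).trans ?_
      rw [hS, ← ENNReal.tsum_mul_left]
      refine le_trans (Finset.sum_le_sum fun m _ => ?_) (ENNReal.sum_le_tsum (Finset.range (K+1)))
      refine (conv_est f _ _ y).trans ?_
      rw [← mul_assoc, ← ENNReal.ofReal_mul (by positivity), ← lintegral_const_mul' _ _ ENNReal.ofReal_ne_top]
      refine lintegral_mono fun z => ?_
      rw [mul_comm, mul_left_comm]
      gcongr
      exact enorm_bd (norm_nonneg _) (hk m (y - z))
    · rw [← ofReal_norm]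
      apply ENNReal.ofReal_le_ofReal
      exact hD (T K) _ (hq0 _) (hq1 _) (hT _) _ (hQ K)
  have lim : Filter.Tendsto (fun K : ℕ => ENNReal.ofReal (C1+C2) * S + ENNReal.ofReal (D * (1/2)^K)) Filter.atTop (nhds (ENNReal.ofReal (C1+C2) * S + ENNReal.ofReal (D * 0))) := by
    refine tendsto_const_nhds.add (ENNReal.tendsto_ofReal (tendsto_const_nhds.mul ?_))
    exact tendsto_pow_atTop_nhds_zero_of_lt_one (by norm_num) (by norm_num)
  have := ge_of_tendsto' lim main
  simpa using this
end CC
end S14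

set_option linter.unusedSectionVars false
namespace S14
open SchwartzMap
open scoped FourierTransform LineDeriv

abbrev EV (n : ℕ) := EuclideanSpace ℝ (Fin n)

section DD
variable {n : ℕ}

def dilL (a : Fin n → ℝ) (t : ℝ) : EV n →ₗ[ℝ] EV n where
  toFun x := WithLp.toLp 2 (fun i => (2:ℝ)^(t * a i) * x i)
  map_add' x y := by ext i; simp [mul_add]
  map_smul' c x := by ext i; simp; ring

lemma dilL_apply (a : Fin n → ℝ) (t : ℝ) (x : EV n) (i : Fin n) : dilL a t x i = (2:ℝ)^(t * a i) * x i := rfl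

lemma dilL_dilL (a : Fin n → ℝ) (s t : ℝ) (x : EV n) : dilL a s (dilL a t x) = dilL a (s+t) x := by
  ext i
  simp only [dilL_apply]
  rw [← mul_assoc, ← Real.rpow_add two_pos, add_mul]

lemma dilL_zero (a : Fin n → ℝ) (x : EV n) : dilL a 0 x = x := by
  ext i; simp [dilL_apply]

def dil (a : Fin n → ℝ) (t : ℝ) : EV n ≃L[ℝ] EV n :=
  (LinearEquiv.ofLinearMap (dilL a t) (dilL a (-t))
    (by ext1 x; simp [dilL_dilL, dilL_zero]) (by ext1 x; simp [dilL_dilL, dilL_zero])).toContinuousLinearEquiv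

lemma dil_apply (a : Fin n → ℝ) (t : ℝ) (x : EV n) (i : Fin n) : dil a t x i = (2:ℝ)^(t * a i) * x i := rfl

lemma dil_dil (a : Fin n → ℝ) (s t : ℝ) (x : EV n) : dil a s (dil a t x) = dil a (s+t) x := dilL_dilL a s t x

lemma dil_zero (a : Fin n → ℝ) (x : EV n) : dil a 0 x = x := dilL_zero a x

lemma dil_norm {a : Fin n → ℝ} (ha : ∀ i, 1 ≤ a i) (m : ℕ) (x : EV n) :
    ‖dil a (-(m:ℝ)) x‖ ≤ (1/2)^m * ‖x‖ := by
  rw [← Real.norm_of_nonneg (show (0:ℝ) ≤ (1/2)^m by positivity), ← norm_smul]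
  rw [EuclideanSpace.norm_eq, EuclideanSpace.norm_eq]
  apply Real.sqrt_le_sqrt
  refine Finset.sum_le_sum fun i _ => ?_
  rw [dil_apply, PiLp.smul_apply, smul_eq_mul, norm_mul, norm_mul]
  gcongr
  rw [Real.norm_of_nonneg (by positivity), Real.norm_of_nonneg (by positivity)]
  rw [one_div, inv_pow, ← Real.rpow_natCast, ← Real.rpow_neg two_pos.le]
  apply Real.rpow_le_rpow_of_exponent_le one_le_two
  have : (0:ℝ) ≤ m := by positivity
  nlinarith [ha i]

def Qf (a : Fin n → ℝ) (s : ℝ) (x : RV n) : ℝ := ∑ i, (x i)^2 / s^(2 * a i)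

lemma Qf_le {a : Fin n → ℝ} (ha : ∀ i, 1 ≤ a i) {t s : ℝ} (ht : 0 < t) (hts : t ≤ s) (x : RV n) :
    Qf a s x ≤ (t/s)^2 * Qf a t x := by
  have hs : 0 < s := ht.trans_le hts
  rw [Qf, Qf, Finset.mul_sum]
  refine Finset.sum_le_sum fun i _ => ?_
  have h1 : (t/s)^(2 * a i) ≤ (t/s)^2 := by
    rw [← Real.rpow_natCast (t/s) 2]
    apply Real.rpow_le_rpow_of_exponent_ge (by positivity) ((div_le_one hs).2 hts)
    push_cast; linarith [ha i]
  rw [Real.div_rpow ht.le hs.le] at h1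
  have h2 : 0 < t^(2 * a i) := Real.rpow_pos_of_pos ht _
  have h3 : 0 < s^(2 * a i) := Real.rpow_pos_of_pos hs _
  calc (x i)^2 / s^(2 * a i) = (t^(2 * a i) / s^(2 * a i)) * ((x i)^2 / t^(2 * a i)) := by field_simp
    _ ≤ _ := by gcongr

lemma Qf_dil (a : Fin n → ℝ) {s : ℝ} (hs : 0 < s) (x : RV n) :
    Qf a s (fun i => (2:ℝ)^(1 * a i) * x i) = Qf a (s/2) x := by
  rw [Qf, Qf]
  refine Finset.sum_congr rfl fun i _ => ?_
  rw [Real.div_rpow hs.le two_pos.le, mul_pow, one_mul, ← Real.rpow_natCast ((2:ℝ)^(a i)) 2, ← Real.rpow_mul two_pos.le]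
  push_cast
  rw [mul_comm (a i) 2]
  have h3 : 0 < s^(2 * a i) := Real.rpow_pos_of_pos hs _
  have h2 : 0 < (2:ℝ)^(2 * a i) := Real.rpow_pos_of_pos two_pos _
  field_simp

lemma annulus {a : Fin n → ℝ} (ha : ∀ i, 1 ≤ a i) {anorm : RV n → ℝ} (h : IsAnorm n a anorm)
    {ε : ℝ} (hε : 0 < ε) (x : RV n) (h1 : Qf a (3/2*ε) x ≤ 1) (h2 : 1/2 ≤ Qf a (3/2*ε/2) x) :
    ε/2 < anorm x ∧ anorm x < 2 * ε := by
  have hx : x ≠ 0 := by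
    rintro rfl
    simp [Qf] at h2
    norm_num at h2
  obtain ⟨ht, hQ⟩ := h.2 x hx
  change Qf a (anorm x) x = 1 at hQ
  set t := anorm x
  constructor
  · by_contra hc
    push Not at hc
    have := Qf_le ha ht (show t ≤ 3/2*ε/2 by linarith) x
    rw [hQ, mul_one] at this
    have h4 : t / (3/2*ε/2) ≤ 2/3 := by rw [div_le_iff₀ (by positivity)]; linarith
    have h5 : 0 ≤ t / (3/2*ε/2) := by positivity
    nlinarith
  · by_contra hc
    push Not at hc
    have := Qf_le ha (show 0 < 3/2*ε by positivity) (show 3/2*ε ≤ t by linarith) x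
    rw [hQ] at this
    have h4 : (3/2*ε)/t ≤ 3/4 := by rw [div_le_iff₀ ht]; linarith
    have h5 : 0 ≤ (3/2*ε)/t := by positivity
    nlinarith

def toV (φ : SchwartzMap (RV n) ℂ) : 𝓢(EV n, ℂ) :=
  compCLMOfContinuousLinearEquiv ℂ (EuclideanSpace.equiv (Fin n) ℝ) φ

lemma toV_apply (φ : SchwartzMap (RV n) ℂ) (x : EV n) : toV φ x = φ (fun i => x i) := rfl

lemma fourier_toV (φ : SchwartzMap (RV n) ℂ) (ξ : EV n) :
    𝓕 (toV φ) ξ = FT n φ (fun i => 2 * Real.pi * ξ i) := by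
  rw [SchwartzMap.fourier_coe, Real.fourier_eq, FT]
  have hmp := (EuclideanSpace.volume_preserving_symm_measurableEquiv_toLp (Fin n))
  rw [← hmp.symm.integral_comp' ]
  refine integral_congr_ae (Filter.Eventually.of_forall fun x => ?_)
  simp only [Circle.smul_def, Real.fourierChar_apply, smul_eq_mul]
  congr 1
  congr 1
  rw [PiLp.inner_apply]
  push_cast
  rw [mul_neg, neg_mul, neg_mul, Finset.mul_sum, Finset.sum_mul, Finset.mul_sum]
  congr 1
  refine Finset.sum_congr rfl fun i _ => ?_
  simp
  ring

lemma Qf_cont (a : Fin n → ℝ) (s : ℝ) : Continuous (fun x : EV n => Qf a s (fun i => 2 * Real.pi * x i)) := by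
  unfold Qf
  fun_prop

lemma Qf_contDiff (a : Fin n → ℝ) (s : ℝ) : ContDiff ℝ (⊤:ℕ∞) (fun x : EV n => Qf a s (fun i => 2 * Real.pi * x i)) := by
  unfold Qf
  fun_prop

def Ph (a : Fin n → ℝ) (s : ℝ) (x : EV n) : ℝ := Real.smoothTransition (2 - 2 * Qf a s (fun i => 2 * Real.pi * x i))

lemma Ph_smooth (a : Fin n → ℝ) (s : ℝ) : ContDiff ℝ (⊤:ℕ∞) (fun x => ((Ph a s x : ℝ) : ℂ)) := by
  refine Complex.ofRealCLM.contDiff.comp ?_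
  exact Real.smoothTransition.contDiff.comp (contDiff_const.sub (contDiff_const.mul (Qf_contDiff a s)))

lemma Ph_one {a : Fin n → ℝ} {s : ℝ} {x : EV n} (h : Qf a s (fun i => 2 * Real.pi * x i) ≤ 1/2) : Ph a s x = 1 :=
  Real.smoothTransition.one_of_one_le (by linarith)

lemma Ph_zero {a : Fin n → ℝ} {s : ℝ} {x : EV n} (h : 1 ≤ Qf a s (fun i => 2 * Real.pi * x i)) : Ph a s x = 0 :=
  Real.smoothTransition.zero_of_nonpos (by linarith)

lemma Ph_dil (a : Fin n → ℝ) {s : ℝ} (hs : 0 < s) (x : EV n) : Ph a s (dil a 1 x) = Ph a (s/2) x := by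
  unfold Ph
  rw [← Qf_dil a hs]
  congr 4
  funext i
  rw [dil_apply]; ring

lemma Qf_bdd {a : Fin n → ℝ} {s : ℝ} (hs : 0 < s) : ∃ R : ℝ, ∀ x : EV n,
    Qf a s (fun i => 2 * Real.pi * x i) ≤ 1 → ‖x‖ ≤ R := by
  refine ⟨Real.sqrt (∑ i, s^(2 * a i)), fun x hx => ?_⟩
  rw [EuclideanSpace.norm_eq]
  apply Real.sqrt_le_sqrt
  refine Finset.sum_le_sum fun i _ => ?_
  have hp : 0 < s^(2 * a i) := Real.rpow_pos_of_pos hs _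
  have h1 : (2 * Real.pi * x i)^2 / s^(2 * a i) ≤ 1 :=
    le_trans (Finset.single_le_sum (f := fun i => (2 * Real.pi * x i)^2 / s^(2 * a i)) (fun j _ => by
      have := Real.rpow_pos_of_pos hs (2 * a j)
      positivity) (Finset.mem_univ i)) hx
  rw [div_le_one hp] at h1
  have h2 : (1:ℝ) ≤ (2 * Real.pi)^2 := by nlinarith [Real.pi_gt_three]
  rw [Real.norm_eq_abs, sq_abs]
  rw [mul_pow] at h1
  nlinarith [sq_nonneg (x i)]

theorem lemT {a : Fin n → ℝ} (ha : ∀ i, 1 ≤ a i) {anorm : RV n → ℝ} (h : IsAnorm n a anorm)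
    {ε : ℝ} (hε : 0 < ε) (ψ : SchwartzMap (RV n) ℂ)
    (hT : ∀ ξ, ε / 2 < anorm ξ → anorm ξ < 2 * ε → 0 < ‖FT n ψ ξ‖) :
    ∃ (Φ lam : EV n → ℂ) (δ : ℝ), 0 < δ ∧ ContDiff ℝ (⊤:ℕ∞) Φ ∧ HasCompactSupport Φ ∧
      ContDiff ℝ (⊤:ℕ∞) lam ∧ HasCompactSupport lam ∧ (∀ x, ‖x‖ < δ → Φ x = 1) ∧
      (∀ x, ‖x‖ < δ → lam x = 0) ∧ ∀ x, lam x * 𝓕 (toV ψ) x = Φ x - Φ (dil a 1 x) := by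
  set s := 3/2*ε with hs
  have hs0 : 0 < s := by positivity
  let Φ : EV n → ℂ := fun x => ((Ph a s x : ℝ) : ℂ)
  let Φ2 : EV n → ℂ := fun x => ((Ph a (s/2) x : ℝ) : ℂ)
  have hΦ2 : ∀ x, Φ (dil a 1 x) = Φ2 x := fun x => by simp only [Φ, Φ2, Ph_dil a hs0]
  let th : EV n → ℂ := fun x => Φ x - Φ2 x
  have hth : ContDiff ℝ (⊤:ℕ∞) th := (Ph_smooth a s).sub (Ph_smooth a (s/2))
  let A : Set (EV n) := {x | Qf a s (fun i => 2 * Real.pi * x i) ≤ 1 ∧ 1/2 ≤ Qf a (s/2) (fun i => 2 * Real.pi * x i)}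
  have hA : IsClosed A := (isClosed_le (Qf_cont a s) continuous_const).inter (isClosed_le continuous_const (Qf_cont a (s/2)))
  have hmono : ∀ x : RV n, Qf a s x ≤ Qf a (s/2) x := by
    intro x
    refine (Qf_le ha (show 0 < s/2 by positivity) (by linarith) x).trans ?_
    refine mul_le_of_le_one_left ?_ ?_
    · unfold Qf
      exact Finset.sum_nonneg fun j _ => by positivity
    · rw [div_div, mul_comm, ← div_div, div_self hs0.ne']; norm_num
  have hsupp : Function.support th ⊆ A := by
    intro x hx
    by_contra hc
    apply hx
    simp only [A, Set.mem_ofPred_eq, not_and_or, not_le] at hc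
    have hm := hmono (fun i => 2 * Real.pi * x i)
    rcases hc with hc | hc
    · simp only [th, Φ, Φ2]
      rw [Ph_zero hc.le, Ph_zero (hc.le.trans hm), sub_self]
    · simp only [th, Φ, Φ2]
      rw [Ph_one hc.le, Ph_one (hm.trans hc.le), sub_self]
  have htsupp : tsupport th ⊆ A := closure_minimal hsupp hA
  have hne : ∀ x ∈ A, 𝓕 (toV ψ) x ≠ 0 := by
    intro x hx
    rw [fourier_toV]
    obtain ⟨h1, h2⟩ := annulus ha h hε _ hx.1 hx.2
    exact norm_pos_iff.1 (hT _ h1 h2)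
  let lam : EV n → ℂ := fun x => th x / 𝓕 (toV ψ) x
  obtain ⟨R, hR⟩ := Qf_bdd (a := a) hs0
  obtain ⟨δ, hδ, hball⟩ : ∃ δ > 0, ∀ x : EV n, ‖x‖ < δ → Qf a (s/2) (fun i => 2 * Real.pi * x i) < 1/2 := by
    have h0 : Qf a (s/2) (fun i => 2 * Real.pi * (0 : EV n) i) < 1/2 := by simp [Qf]
    have := ((Qf_cont a (s/2)).tendsto 0).eventually_lt_const h0
    obtain ⟨δ, hδ, hb⟩ := Metric.eventually_nhds_iff.1 this
    exact ⟨δ, hδ, fun x hx => hb (by simpa using hx)⟩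
  refine ⟨Φ, lam, δ, hδ, Ph_smooth a s, ?_, ?_, ?_, ?_, ?_, ?_⟩
  · refine HasCompactSupport.intro (isCompact_closedBall (0 : EV n) R) (fun x hx => ?_)
    have : ¬ Qf a s (fun i => 2 * Real.pi * x i) ≤ 1 := fun hc => hx (by simpa using hR x hc)
    simp only [Φ]
    rw [Ph_zero (le_of_lt (not_le.1 this))]; simp
  · rw [contDiff_iff_contDiffAt]
    intro x
    by_cases hx : x ∈ tsupport th
    · have h1 : ContDiffAt ℝ (⊤:ℕ∞) (fun x => (𝓕 (toV ψ) x)⁻¹) x :=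
        ContDiffAt.inv (((𝓕 (toV ψ)).smooth (⊤:ℕ∞)).contDiffAt) (hne x (htsupp hx))
      simp only [lam, div_eq_mul_inv]
      exact hth.contDiffAt.mul h1
    · have : lam =ᶠ[nhds x] fun _ => 0 := by
        filter_upwards [notMem_tsupport_iff_eventuallyEq.1 hx] with y hy
        simp only [lam, hy]; simp
      exact contDiffAt_const.congr_of_eventuallyEq this
  · refine HasCompactSupport.intro (isCompact_closedBall (0 : EV n) R) (fun x hx => ?_)
    have : x ∉ A := fun hc => hx (by simpa using hR x hc.1)
    have : th x = 0 := by
      by_contra h0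
      exact this (hsupp h0)
    simp [lam, this]
  · intro x hx
    have := (hball x hx).le
    simp only [Φ]
    rw [Ph_one ((hmono _).trans this)]; simp
  · intro x hx
    have := (hball x hx).le
    simp only [lam, th, Φ, Φ2]
    rw [Ph_one this, Ph_one ((hmono _).trans this)]; simp
  · intro x
    rw [hΦ2]
    by_cases hx : x ∈ A
    · simp only [lam]
      rw [div_mul_cancel₀ _ (hne x hx)]
    · have : th x = 0 := by
        by_contra h0
        exact hx (hsupp h0)
      have h2 : Φ x - Φ2 x = 0 := this
      simp only [lam, this, h2]; simp
end DD
end S14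

set_option linter.unusedSectionVars false
namespace S14
open SchwartzMap
open scoped FourierTransform LineDeriv

section FF
variable {n : ℕ}

lemma dil_map (a : Fin n → ℝ) (t : ℝ) :
    Measure.map (dil a t) (volume : Measure (EV n)) = ENNReal.ofReal ((2:ℝ)^(-(t * ∑ i, a i))) • volume := by
  have hdet : LinearMap.det (dilL a t) = (2:ℝ)^(t * ∑ i, a i) := by
    rw [← LinearMap.det_toMatrix (EuclideanSpace.basisFun (Fin n) ℝ).toBasis]
    have : LinearMap.toMatrix (EuclideanSpace.basisFun (Fin n) ℝ).toBasis (EuclideanSpace.basisFun (Fin n) ℝ).toBasis (dilL a t)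
        = Matrix.diagonal (fun i => (2:ℝ)^(t * a i)) := by
      ext i j
      rw [LinearMap.toMatrix_apply]
      simp [dilL_apply, Matrix.diagonal_apply]
    rw [this, Matrix.det_diagonal, Finset.mul_sum, Real.rpow_sum_of_pos two_pos]
  have hp : 0 < (2:ℝ)^(t * ∑ i, a i) := Real.rpow_pos_of_pos two_pos _
  have := Measure.map_linearMap_addHaar_eq_smul_addHaar (volume : Measure (EV n)) (f := dilL a t) (by rw [hdet]; exact hp.ne')
  rw [hdet, abs_of_pos (inv_pos.2 hp), ← Real.rpow_neg two_pos.le] at this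
  exact this

lemma dil_lintegral (a : Fin n → ℝ) (t : ℝ) (h : EV n → ℝ≥0∞) :
    ∫⁻ z, h z = ENNReal.ofReal ((2:ℝ)^(t * ∑ i, a i)) * ∫⁻ z, h (dil a t z) := by
  have h1 : ∫⁻ z, h (dil a t z) = ∫⁻ z, h z ∂(Measure.map (dil a t) volume) :=
    (lintegral_map_equiv h (dil a t).toHomeomorph.toMeasurableEquiv).symm
  rw [h1, dil_map, lintegral_smul_measure, smul_eq_mul, ← mul_assoc, ← ENNReal.ofReal_mul (by positivity),
    ← Real.rpow_add two_pos]
  simp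

lemma dil_integral (a : Fin n → ℝ) (t : ℝ) (h : EV n → ℂ) :
    ∫ z, h (dil a t z) = ((2:ℝ)^(-(t * ∑ i, a i))) • ∫ z, h z := by
  have h1 : ∫ z, h (dil a t z) = ∫ z, h z ∂(Measure.map (dil a t) volume) :=
    (integral_map_equiv (dil a t).toHomeomorph.toMeasurableEquiv h).symm
  rw [h1, dil_map, integral_smul_measure, ENNReal.toReal_ofReal (by positivity)]

lemma V_lintegral (h : RV n → ℝ≥0∞) : ∫⁻ z : EV n, h (fun i => z i) = ∫⁻ z : RV n, h z :=
  (EuclideanSpace.volume_preserving_symm_measurableEquiv_toLp (Fin n)).lintegral_comp_emb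
    (MeasurableEquiv.measurableEmbedding _) h

/-- `2^{t|a|} φ(2^{ta} x)`. -/
def Sc (a : Fin n → ℝ) (t : ℝ) (φ : 𝓢(EV n, ℂ)) : 𝓢(EV n, ℂ) :=
  (((2:ℝ)^(t * ∑ i, a i) : ℝ) : ℂ) • compCLMOfContinuousLinearEquiv ℂ (dil a t) φ

lemma Sc_apply (a : Fin n → ℝ) (t : ℝ) (φ : 𝓢(EV n, ℂ)) (x : EV n) :
    Sc a t φ x = (((2:ℝ)^(t * ∑ i, a i) : ℝ) : ℂ) * φ (dil a t x) := rfl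

lemma dil_inner (a : Fin n → ℝ) (t : ℝ) (x y : EV n) : inner ℝ (dil a t x) y = inner ℝ x (dil a t y) := by
  rw [PiLp.inner_apply, PiLp.inner_apply]
  refine Finset.sum_congr rfl fun i _ => ?_
  simp [dil_apply]; ring

lemma fourier_Sc (a : Fin n → ℝ) (t : ℝ) (φ : 𝓢(EV n, ℂ)) (ξ : EV n) :
    𝓕 (Sc a t φ) ξ = 𝓕 φ (dil a (-t) ξ) := by
  rw [SchwartzMap.fourier_coe, Real.fourier_eq, SchwartzMap.fourier_coe, Real.fourier_eq]
  have h1 := dil_integral a t (fun v => (Real.fourierChar (-(inner ℝ v (dil a (-t) ξ)))) • φ v)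
  have hp : (0:ℝ) < (2:ℝ)^(t * ∑ i, a i) := Real.rpow_pos_of_pos two_pos _
  rw [Real.rpow_neg two_pos.le] at h1
  have h2 := congrArg (fun w : ℂ => ((2:ℝ)^(t * ∑ i, a i)) • w) h1
  simp only [smul_smul, mul_inv_cancel₀ hp.ne', one_smul] at h2
  rw [← h2, ← integral_smul]
  refine integral_congr_ae (Filter.Eventually.of_forall fun x => ?_)
  simp only [Sc_apply]
  rw [dil_inner, dil_dil, add_neg_cancel, dil_zero, smul_comm]
  rfl

/-- the functional `φ ↦ 2^{j|a|} f (φ ∘ 2^{ja})`. -/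
def fj (a : Fin n → ℝ) (j : ℝ) (f : TD n) : 𝓢(EV n, ℂ) →L[ℂ] ℂ :=
  (((2:ℝ)^(j * ∑ i, a i) : ℝ) : ℂ) • f.comp (compCLMOfContinuousLinearEquiv ℂ
    ((EuclideanSpace.equiv (Fin n) ℝ).symm.trans (dil a j)))

lemma fj_Rr (a : Fin n → ℝ) (j : ℝ) (f : TD n) (G : 𝓢(EV n, ℂ)) (z : EV n) :
    ∃ Ψ : SchwartzMap (RV n) ℂ, (∀ x, Ψ x = (((2:ℝ)^(j * ∑ i, a i) : ℝ) : ℂ) * G (z - dil a j (WithLp.toLp 2 x))) ∧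
      fj a j f (Rr z G) = f Ψ := by
  refine ⟨(((2:ℝ)^(j * ∑ i, a i) : ℝ) : ℂ) • compCLMOfContinuousLinearEquiv ℂ
    ((EuclideanSpace.equiv (Fin n) ℝ).symm.trans (dil a j)) (Rr z G), fun x => ?_, ?_⟩
  · rw [← Rr_apply]; rfl
  · rw [map_smul]; rfl

def Gm (a : Fin n → ℝ) (g0 ψ : SchwartzMap (RV n) ℂ) : ℕ → 𝓢(EV n, ℂ)
  | 0 => toV g0
  | (m+1) => Sc a ((m+1 : ℕ):ℝ) (toV ψ)

lemma conv_fj (a : Fin n → ℝ)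
    (conv : TD n → (RV n → ℂ) → RV n → ℂ)
    (hconv : ∀ (f : TD n) (g : RV n → ℂ) (x : RV n) (Ψ : SchwartzMap (RV n) ℂ),
      (∀ y, Ψ y = g (x - y)) → conv f g x = f Ψ)
    (ψ0 ψ : SchwartzMap (RV n) ℂ) (f : TD n) (j m : ℕ) (z : EV n) :
    conv f (fam n a ψ0 ψ (j+m)) (fun i => z i) =
      fj a j f (Rr (dil a j z) (Gm a (if j = 0 then ψ0 else ψ) ψ m)) := by
  obtain ⟨Ψ, h1, h2⟩ := fj_Rr a j f (Gm a (if j = 0 then ψ0 else ψ) ψ m) (dil a j z)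
  rw [h2]
  refine hconv f _ _ Ψ (fun y => ?_)
  rw [h1, ← map_sub]
  cases m with
  | zero =>
    simp only [Gm, toV_apply]
    cases j with
    | zero =>
      simp only [if_true, fam, Nat.cast_zero, zero_mul, Real.rpow_zero]
      rw [dil_zero]; simp; rfl
    | succ j =>
      simp only [Nat.succ_ne_zero, if_false, fam]
      push_cast
      congr 2
  | succ m =>
    simp only [Gm, Sc_apply, toV_apply]
    rw [dil_dil, ← mul_assoc, ← Complex.ofReal_mul, ← Real.rpow_add two_pos, ← add_mul]
    rw [show j + (m+1) = (j+m)+1 by ring]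
    simp only [fam]
    push_cast
    have e1 : ((j:ℝ)+m+1) = j + (m+1) := by ring
    rw [e1]
    congr 2
    funext i
    rw [dil_apply, show ((m:ℝ)+1+j) = j+(m+1) by ring]
    rfl

theorem H1raw {a : Fin n → ℝ} (ha : ∀ i, 1 ≤ a i) {anorm : RV n → ℝ} (h : IsAnorm n a anorm)
    (conv : TD n → (RV n → ℂ) → RV n → ℂ)
    (hconv : ∀ (f : TD n) (g : RV n → ℂ) (x : RV n) (Ψ : SchwartzMap (RV n) ℂ),
      (∀ y, Ψ y = g (x - y)) → conv f g x = f Ψ)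
    {ε : ℝ} (hε : 0 < ε) (ψ0 ψ : SchwartzMap (RV n) ℂ)
    (hT : ∀ ξ, ε / 2 < anorm ξ → anorm ξ < 2 * ε → 0 < ‖FT n ψ ξ‖) (L M : ℕ) :
    ∃ C : ℝ, 0 ≤ C ∧ ∀ (f : TD n) (j : ℕ) (y : RV n),
      ‖conv f (fam n a ψ0 ψ j) y‖ₑ ≤ ENNReal.ofReal C * ∑' m : ℕ, ENNReal.ofReal (((1/2)^m)^L) *
        (ENNReal.ofReal ((2:ℝ)^((j:ℝ) * ∑ i, a i)) * ∫⁻ z : RV n, ‖conv f (fam n a ψ0 ψ (j+m)) z‖ₑ *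
          ENNReal.ofReal (((1+‖dil a j (WithLp.toLp 2 (y - z))‖)^M)⁻¹)) := by
  obtain ⟨Φ, lam, δ, hδ, hΦ, hΦc, hl, hlc, hΦ1, hl0, hrel⟩ := lemT ha h hε ψ hT
  let T : ℕ → EV n →L[ℝ] EV n := fun m => (dil a (-(m:ℝ))).toContinuousLinearMap
  have hTm : ∀ m x, T m x = dil a (-(m:ℝ)) x := fun m x => rfl
  have key : ∀ g0 : SchwartzMap (RV n) ℂ, ∃ C : ℝ, 0 ≤ C ∧ ∀ (f : 𝓢(EV n, ℂ) →L[ℂ] ℂ) (y : EV n), ‖f (Rr y (Gm a g0 ψ 0))‖ₑ ≤ ENNReal.ofReal C *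
      ∑' m : ℕ, ENNReal.ofReal (((1/2)^m)^L) *
        ∫⁻ z, ‖f (Rr z (Gm a g0 ψ m))‖ₑ * ENNReal.ofReal (((1+‖y-z‖)^M)⁻¹) := by
    intro g0
    refine thmA T (fun x => ?_) (fun m x => ?_) hΦ hΦc hl hlc hδ hΦ1 hl0 (Gm a g0 ψ) (fun m x => ?_) L M
    · rw [hTm]; simp [dil_zero]
    · exact dil_norm ha m x
    · have : 𝓕 (Gm a g0 ψ (m+1)) x = 𝓕 (toV ψ) (T (m+1) x) := fourier_Sc a _ _ x
      rw [this, hrel, hTm, hTm, dil_dil]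
      congr 3
      push_cast; ring_nf
  obtain ⟨C0, hC0, h0⟩ := key ψ0
  obtain ⟨C1, hC1, h1⟩ := key ψ
  have key2 : ∀ (j : ℕ) (f : 𝓢(EV n, ℂ) →L[ℂ] ℂ) (y : EV n), ‖f (Rr y (Gm a (if j = 0 then ψ0 else ψ) ψ 0))‖ₑ ≤ ENNReal.ofReal (C0+C1) *
      ∑' m : ℕ, ENNReal.ofReal (((1/2)^m)^L) *
        ∫⁻ z, ‖f (Rr z (Gm a (if j = 0 then ψ0 else ψ) ψ m))‖ₑ * ENNReal.ofReal (((1+‖y-z‖)^M)⁻¹) := by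
    intro j f y
    split_ifs
    · refine (h0 f y).trans ?_
      gcongr; linarith
    · refine (h1 f y).trans ?_
      gcongr; linarith
  refine ⟨C0 + C1, by positivity, fun f j y => ?_⟩
  have hc := conv_fj a conv hconv ψ0 ψ f j
  have h2 := key2 j (fj a j f) (dil a j (WithLp.toLp 2 y))
  rw [← hc 0 (WithLp.toLp 2 y)] at h2
  refine h2.trans (le_of_eq ?_)
  congr 2
  funext m
  congr 1
  rw [dil_lintegral a j]
  congr 1
  rw [← V_lintegral]
  refine lintegral_congr fun z => ?_
  rw [hc m z, ← map_sub]
  rfl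
end FF
end S14

set_option linter.unusedSectionVars false
namespace S14
open SchwartzMap
open scoped FourierTransform LineDeriv

section GG
variable {n : ℕ}

def wt (a : Fin n → ℝ) (k : ℝ) (s : Fin n → ℝ) (x : RV n) : ℝ :=
  ∏ l, (1 + (2:ℝ)^(k * a l) * |x l|) ^ (s l)

lemma base_pos (a : Fin n → ℝ) (k : ℝ) (x : RV n) (l : Fin n) : 0 < 1 + (2:ℝ)^(k * a l) * |x l| := by positivity

lemma base_one (a : Fin n → ℝ) (k : ℝ) (x : RV n) (l : Fin n) : 1 ≤ 1 + (2:ℝ)^(k * a l) * |x l| :=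
  le_add_of_nonneg_right (by positivity)

lemma wt_pos (a : Fin n → ℝ) (k : ℝ) (s : Fin n → ℝ) (x : RV n) : 0 < wt a k s x :=
  Finset.prod_pos fun l _ => Real.rpow_pos_of_pos (base_pos a k x l) _

lemma wt_one (a : Fin n → ℝ) (k : ℝ) {s : Fin n → ℝ} (hs : ∀ l, 0 ≤ s l) (x : RV n) : 1 ≤ wt a k s x := by
  unfold wt
  exact Finset.one_le_prod fun l _ => Real.one_le_rpow (base_one a k x l) (hs l)

lemma wt_add (a : Fin n → ℝ) (k : ℝ) (s t : Fin n → ℝ) (x : RV n) :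
    wt a k (fun l => s l + t l) x = wt a k s x * wt a k t x := by
  unfold wt
  rw [← Finset.prod_mul_distrib]
  exact Finset.prod_congr rfl fun l _ => Real.rpow_add (base_pos a k x l) _ _

lemma wt_mono_s (a : Fin n → ℝ) (k : ℝ) {s t : Fin n → ℝ} (hst : ∀ l, s l ≤ t l) (x : RV n) :
    wt a k s x ≤ wt a k t x := by
  unfold wt
  refine Finset.prod_le_prod (fun l _ => (Real.rpow_pos_of_pos (base_pos a k x l) _).le) fun l _ => ?_
  exact Real.rpow_le_rpow_of_exponent_le (base_one a k x l) (hst l)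

lemma wt_mono_k {a : Fin n → ℝ} (ha : ∀ i, 1 ≤ a i) {k k' : ℝ} (hk : k ≤ k') {s : Fin n → ℝ} (hs : ∀ l, 0 ≤ s l) (x : RV n) :
    wt a k s x ≤ wt a k' s x := by
  unfold wt
  refine Finset.prod_le_prod (fun l _ => (Real.rpow_pos_of_pos (base_pos a k x l) _).le) fun l _ => ?_
  have := ha l
  have h2 : (2:ℝ)^(k * a l) ≤ (2:ℝ)^(k' * a l) := Real.rpow_le_rpow_of_exponent_le one_le_two (by nlinarith)
  exact Real.rpow_le_rpow (base_pos a k x l).le (by gcongr) (hs l)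

/-- `w_{j+m}^s ≤ 2^{mΣ a s} w_j^s` -/
lemma wt_shift {a : Fin n → ℝ} (ha : ∀ i, 1 ≤ a i) (j : ℝ) {m : ℝ} (hm : 0 ≤ m) {s : Fin n → ℝ} (hs : ∀ l, 0 ≤ s l) (x : RV n) :
    wt a (j+m) s x ≤ (2:ℝ)^(m * ∑ l, a l * s l) * wt a j s x := by
  unfold wt
  rw [Finset.mul_sum, Real.rpow_sum_of_pos two_pos, ← Finset.prod_mul_distrib]
  refine Finset.prod_le_prod (fun l _ => (Real.rpow_pos_of_pos (base_pos a _ x l) _).le) fun l _ => ?_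
  rw [← mul_assoc, Real.rpow_mul two_pos.le (m * a l) (s l), ← Real.mul_rpow (by positivity) (by positivity)]
  refine Real.rpow_le_rpow (base_pos a _ x l).le ?_ (hs l)
  have h1 : (1:ℝ) ≤ 2^(m * a l) := Real.one_le_rpow one_le_two (mul_nonneg hm (by linarith [ha l]))
  rw [add_mul, Real.rpow_add two_pos]
  nlinarith [mul_nonneg (Real.rpow_pos_of_pos two_pos (j * a l)).le (abs_nonneg (x l))]

/-- submultiplicativity -/
lemma wt_tri (a : Fin n → ℝ) (k : ℝ) {s : Fin n → ℝ} (hs : ∀ l, 0 ≤ s l) (x y z : RV n) :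
    wt a k s (x - z) ≤ wt a k s (x - y) * wt a k s (y - z) := by
  unfold wt
  rw [← Finset.prod_mul_distrib]
  refine Finset.prod_le_prod (fun l _ => (Real.rpow_pos_of_pos (base_pos a _ _ l) _).le) fun l _ => ?_
  rw [← Real.mul_rpow (by positivity) (by positivity)]
  refine Real.rpow_le_rpow (base_pos a _ _ l).le ?_ (hs l)
  have hp : (0:ℝ) < 2^(k * a l) := Real.rpow_pos_of_pos two_pos _
  have : |(x - z) l| ≤ |(x - y) l| + |(y - z) l| := by
    simp only [Pi.sub_apply]; exact abs_sub_le _ _ _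
  have h3 := mul_le_mul_of_nonneg_left this hp.le
  nlinarith [mul_nonneg (mul_nonneg hp.le (abs_nonneg ((x-y) l))) (mul_nonneg hp.le (abs_nonneg ((y-z) l)))]

lemma wt_le_norm (a : Fin n → ℝ) (j : ℝ) {s : Fin n → ℝ} (hs : ∀ l, 0 ≤ s l) {M : ℕ} (hM : ∑ l, s l ≤ M) (x : RV n) :
    wt a j s x ≤ (1 + ‖dil a j (WithLp.toLp 2 x)‖)^M := by
  set t := ‖dil a j (WithLp.toLp 2 x)‖ with ht
  have ht0 : 0 ≤ t := norm_nonneg _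
  calc wt a j s x ≤ ∏ l, (1+t)^(s l) := by
        refine Finset.prod_le_prod (fun l _ => (Real.rpow_pos_of_pos (base_pos a _ x l) _).le) fun l _ => ?_
        refine Real.rpow_le_rpow (base_pos a _ x l).le ?_ (hs l)
        have := PiLp.norm_apply_le (dil a j (WithLp.toLp 2 x)) l
        rw [dil_apply, norm_mul, Real.norm_of_nonneg (by positivity), Real.norm_eq_abs] at this
        have h4 : (2:ℝ)^(j * a l) * |x l| ≤ t := this
        linarith
    _ = (1+t)^(∑ l, s l) := by rw [Real.rpow_sum_of_pos (by positivity)]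
    _ ≤ (1+t)^(M:ℝ) := Real.rpow_le_rpow_of_exponent_le (by linarith) hM
    _ = _ := Real.rpow_natCast _ _

lemma norm_le_wt (x : RV n) : 1 + ‖(WithLp.toLp 2 x : EV n)‖ ≤ ∏ l, (1 + |x l|) := by
  have h1 : ‖(WithLp.toLp 2 x : EV n)‖ ≤ ∑ l, |x l| := by
    rw [EuclideanSpace.norm_eq]
    refine Real.sqrt_le_iff.2 ⟨Finset.sum_nonneg fun _ _ => abs_nonneg _, ?_⟩
    exact Finset.sum_sq_le_sq_sum_of_nonneg (fun i _ => norm_nonneg _)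
  refine le_trans (add_le_add_right h1 1) ?_
  have : ∀ S : Finset (Fin n), 1 + ∑ l ∈ S, |x l| ≤ ∏ l ∈ S, (1 + |x l|) := by
    intro S
    induction S using Finset.induction_on with
    | empty => simp
    | insert b S hb ih =>
      rw [Finset.sum_insert hb, Finset.prod_insert hb]
      have h2 : 0 ≤ ∑ l ∈ S, |x l| := Finset.sum_nonneg fun _ _ => abs_nonneg _
      nlinarith [abs_nonneg (x b), mul_nonneg (abs_nonneg (x b)) h2]
  exact this _
end GG
end S14

set_option linter.unusedSectionVars false
namespace S14
open SchwartzMap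
open scoped FourierTransform LineDeriv

section HH
variable {n : ℕ}

lemma h1_real {a : Fin n → ℝ} (ha : ∀ i, 1 ≤ a i) (L : ℝ) {s : Fin n → ℝ} (hs : ∀ l, 0 ≤ s l) {L' M : ℕ}
    (hL : L + ∑ l, a l * s l ≤ L') (hM : ∑ l, s l ≤ M) (j m : ℕ) (x : RV n) :
    ((1/2:ℝ)^m)^L' * ((2:ℝ)^((j:ℝ) * ∑ i, a i) * ((1+‖dil a j (WithLp.toLp 2 x)‖)^M)⁻¹) ≤
      (2:ℝ)^(-((m:ℝ)*L)) * ((2:ℝ)^(((j+m:ℕ):ℝ) * ∑ i, a i) * (wt a ((j+m:ℕ):ℝ) s x)⁻¹) := by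
  have hm : (0:ℝ) ≤ m := by positivity
  have hA : 0 ≤ ∑ i, a i := Finset.sum_nonneg fun i _ => by linarith [ha i]
  have e1 : ((1/2:ℝ)^m)^L' = (2:ℝ)^(-((m:ℝ)*L')) := by
    rw [← pow_mul, one_div, inv_pow, Real.rpow_neg two_pos.le]
    congr 1
    rw [← Nat.cast_mul, Real.rpow_natCast]
  have e2 : ((1+‖dil a j (WithLp.toLp 2 x)‖)^M)⁻¹ ≤ (2:ℝ)^((m:ℝ) * ∑ l, a l * s l) * (wt a ((j+m:ℕ):ℝ) s x)⁻¹ := by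
    have h1 := wt_shift ha (j:ℝ) hm hs x
    have h2 := wt_le_norm a j hs hM x
    have h3 := wt_pos a ((j:ℝ)+m) s x
    push_cast
    rw [← div_eq_mul_inv, le_div_iff₀ h3, inv_mul_le_iff₀ (by positivity)]
    refine h1.trans ?_
    rw [mul_comm]
    gcongr
  rw [e1]
  calc (2:ℝ)^(-((m:ℝ)*L')) * ((2:ℝ)^((j:ℝ) * ∑ i, a i) * ((1+‖dil a j (WithLp.toLp 2 x)‖)^M)⁻¹)
      ≤ (2:ℝ)^(-((m:ℝ)*L')) * ((2:ℝ)^(((j+m:ℕ):ℝ) * ∑ i, a i) * ((2:ℝ)^((m:ℝ) * ∑ l, a l * s l) * (wt a ((j+m:ℕ):ℝ) s x)⁻¹)) := by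
        gcongr
        · exact one_le_two
        · linarith
    _ = ((2:ℝ)^(-((m:ℝ)*L')) * (2:ℝ)^((m:ℝ) * ∑ l, a l * s l)) * ((2:ℝ)^(((j+m:ℕ):ℝ) * ∑ i, a i) * (wt a ((j+m:ℕ):ℝ) s x)⁻¹) := by ring
    _ ≤ _ := by
        rw [← Real.rpow_add two_pos]
        have := (wt_pos a ((j+m:ℕ):ℝ) s x).le
        gcongr
        · exact one_le_two
        · nlinarith

theorem H1p {a : Fin n → ℝ} (ha : ∀ i, 1 ≤ a i) {anorm : RV n → ℝ} (h : IsAnorm n a anorm)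
    (conv : TD n → (RV n → ℂ) → RV n → ℂ)
    (hconv : ∀ (f : TD n) (g : RV n → ℂ) (x : RV n) (Ψ : SchwartzMap (RV n) ℂ),
      (∀ y, Ψ y = g (x - y)) → conv f g x = f Ψ)
    {ε : ℝ} (hε : 0 < ε) (ψ0 ψ : SchwartzMap (RV n) ℂ)
    (hT : ∀ ξ, ε / 2 < anorm ξ → anorm ξ < 2 * ε → 0 < ‖FT n ψ ξ‖) (L : ℝ) (s : Fin n → ℝ) (hs : ∀ l, 0 ≤ s l) :
    ∃ C : ℝ, 0 ≤ C ∧ ∀ (f : TD n) (j : ℕ) (y : RV n),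
      ‖conv f (fam n a ψ0 ψ j) y‖ₑ ≤ ENNReal.ofReal C * ∑' m : ℕ, ENNReal.ofReal ((2:ℝ)^(-((m:ℝ)*L))) *
        ∫⁻ z : RV n, ENNReal.ofReal ((2:ℝ)^(((j+m:ℕ):ℝ) * ∑ i, a i)) * ‖conv f (fam n a ψ0 ψ (j+m)) z‖ₑ /
          ENNReal.ofReal (wt a ((j+m:ℕ):ℝ) s (y - z)) := by
  obtain ⟨L', hL⟩ := exists_nat_ge (L + ∑ l, a l * s l)
  obtain ⟨M, hM⟩ := exists_nat_ge (∑ l, s l)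
  obtain ⟨C, hC, h1⟩ := H1raw ha h conv hconv hε ψ0 ψ hT L' M
  refine ⟨C, hC, fun f j y => (h1 f j y).trans ?_⟩
  refine mul_le_mul' le_rfl (ENNReal.tsum_le_tsum fun m => ?_)
  rw [← mul_assoc, ← ENNReal.ofReal_mul (by positivity), ← lintegral_const_mul' _ _ ENNReal.ofReal_ne_top,
    ← lintegral_const_mul' _ _ ENNReal.ofReal_ne_top]
  refine lintegral_mono fun z => ?_
  have := ENNReal.ofReal_le_ofReal (h1_real ha L hs hL hM j m (y - z))
  have hw := wt_pos a ((j+m:ℕ):ℝ) s (y - z)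
  rw [ENNReal.ofReal_mul (by positivity), ENNReal.ofReal_mul (by positivity), ENNReal.ofReal_mul (by positivity), ENNReal.ofReal_mul (by positivity),
    ENNReal.ofReal_inv_of_pos hw] at this
  rw [ENNReal.ofReal_mul (by positivity)]
  calc _ = (ENNReal.ofReal (((1/2:ℝ)^m)^L') * (ENNReal.ofReal ((2:ℝ)^((j:ℝ) * ∑ i, a i)) * ENNReal.ofReal (((1+‖dil a j (WithLp.toLp 2 (y-z))‖)^M)⁻¹))) * ‖conv f (fam n a ψ0 ψ (j+m)) z‖ₑ := by ring
    _ ≤ _ := mul_le_mul' this le_rfl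
    _ = _ := by rw [ENNReal.div_eq_inv_mul (a := ENNReal.ofReal _ * _)]; ring

lemma Rr_bd {V : Type*} [NormedAddCommGroup V] [InnerProductSpace ℝ V] [FiniteDimensional ℝ V]
    [MeasurableSpace V] [BorelSpace V] (φ : 𝓢(V, ℂ)) (p q : ℕ) {D : ℝ} (hD0 : 0 ≤ D)
    (hD : ∀ x, (1+‖x‖)^p * ‖iteratedFDeriv ℝ q φ x‖ ≤ D) (y : V) :
    SchwartzMap.seminorm ℂ p q (Rr y φ) ≤ (1+‖y‖)^p * D := by
  refine SchwartzMap.seminorm_le_bound ℂ p q _ (by positivity) fun x => ?_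
  have h1 : ‖iteratedFDeriv ℝ q (Rr y φ) x‖ = ‖iteratedFDeriv ℝ q φ (-(x - y))‖ := by
    have := trans_apply_iter (compCLMOfContinuousLinearEquiv ℂ (ContinuousLinearEquiv.neg ℝ) φ) q y x
    have e : (iteratedFDeriv ℝ q (Rr y φ) x) = _ := this
    rw [e]
    exact (LinearIsometryEquiv.neg ℝ (E := V)).norm_iteratedFDeriv_comp_right φ (x - y) q
  rw [h1]
  calc _ ≤ ((1+‖y‖)^p * (1 + ‖x - y‖)^p) * ‖iteratedFDeriv ℝ q φ (-(x - y))‖ := by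
        gcongr; exact pow_shift p x y
    _ = (1+‖y‖)^p * ((1 + ‖-(x - y)‖)^p * ‖iteratedFDeriv ℝ q φ (-(x - y))‖) := by rw [norm_neg]; ring
    _ ≤ _ := by gcongr; exact hD _

lemma dil_norm' {a : Fin n → ℝ} (ha : ∀ i, 1 ≤ a i) (m : ℕ) (x : EV n) :
    ‖dil a (m:ℝ) x‖ ≤ (2:ℝ)^((m:ℝ) * ∑ i, a i) * ‖x‖ := by
  rw [← Real.norm_of_nonneg (show (0:ℝ) ≤ (2:ℝ)^((m:ℝ) * ∑ i, a i) by positivity), ← norm_smul]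
  rw [EuclideanSpace.norm_eq, EuclideanSpace.norm_eq]
  apply Real.sqrt_le_sqrt
  refine Finset.sum_le_sum fun i _ => ?_
  rw [dil_apply, PiLp.smul_apply, smul_eq_mul, norm_mul, norm_mul]
  gcongr
  rw [Real.norm_of_nonneg (by positivity), Real.norm_of_nonneg (by positivity)]
  apply Real.rpow_le_rpow_of_exponent_le one_le_two
  gcongr
  exact Finset.single_le_sum (f := a) (fun i _ => by linarith [ha i]) (Finset.mem_univ i)

lemma Sc_bd {a : Fin n → ℝ} (ha : ∀ i, 1 ≤ a i) (φ : 𝓢(EV n, ℂ)) (p q : ℕ) :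
    ∃ D, 0 ≤ D ∧ ∀ (m : ℕ) x, (1+‖x‖)^p * ‖iteratedFDeriv ℝ q (Sc a m φ) x‖ ≤ D * (2:ℝ)^((m:ℝ) * ((∑ i, a i) * (1+q))) := by
  obtain ⟨D, hD, hb⟩ := one_add_bound φ p q
  refine ⟨D, hD, fun m x => ?_⟩
  have h0 : ‖x‖ ≤ ‖dil a m x‖ := by
    have := dil_norm ha m (dil a m x)
    rw [dil_dil, neg_add_cancel, dil_zero] at this
    refine this.trans (mul_le_of_le_one_left (norm_nonneg _) (pow_le_one₀ (by norm_num) (by norm_num)))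
  set c := (2:ℝ)^((m:ℝ) * ∑ i, a i) with hc
  have hc0 : 0 < c := Real.rpow_pos_of_pos two_pos _
  have h1 : ‖iteratedFDeriv ℝ q (Sc a m φ) x‖ ≤ c * (‖iteratedFDeriv ℝ q φ (dil a m x)‖ * c^q) := by
    have e : (⇑(Sc a m φ)) = (c:ℂ) • (⇑φ ∘ (dil a m).toContinuousLinearMap) := rfl
    have hs : ContDiff ℝ (⊤:ℕ∞) (⇑φ ∘ (dil a m).toContinuousLinearMap) := (φ.smooth (⊤:ℕ∞)).comp (ContinuousLinearMap.contDiff _)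
    rw [e, iteratedFDeriv_const_smul_apply (hs.of_le (mod_cast le_top)).contDiffAt, norm_smul, Complex.norm_real, Real.norm_of_nonneg hc0.le]
    gcongr
    rw [(dil a m).toContinuousLinearMap.iteratedFDeriv_comp_right (φ.smooth (⊤:ℕ∞)) x (i := q) (mod_cast le_top)]
    refine (ContinuousMultilinearMap.norm_compContinuousLinearMap_le _ _).trans ?_
    rw [Finset.prod_const, Finset.card_univ, Fintype.card_fin]
    gcongr
    · exact le_rfl
    · exact ContinuousLinearMap.opNorm_le_bound _ hc0.le (dil_norm' ha m)
  have e2 : (2:ℝ)^((m:ℝ) * ((∑ i, a i) * (1+q))) = c * c^q := by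
    rw [hc, ← Real.rpow_natCast, ← Real.rpow_mul two_pos.le, ← Real.rpow_add two_pos]
    ring_nf
  rw [e2]
  calc _ ≤ (1+‖dil a m x‖)^p * (c * (‖iteratedFDeriv ℝ q φ (dil a m x)‖ * c^q)) := by gcongr
    _ = ((1+‖dil a m x‖)^p * ‖iteratedFDeriv ℝ q φ (dil a m x)‖) * (c * c^q) := by ring
    _ ≤ _ := by gcongr; exact hb _

theorem H2p {a : Fin n → ℝ} (ha : ∀ i, 1 ≤ a i)
    (conv : TD n → (RV n → ℂ) → RV n → ℂ)
    (hconv : ∀ (f : TD n) (g : RV n → ℂ) (x : RV n) (Ψ : SchwartzMap (RV n) ℂ),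
      (∀ y, Ψ y = g (x - y)) → conv f g x = f Ψ)
    (ψ0 ψ : SchwartzMap (RV n) ℂ) (f : TD n) :
    ∃ (C A : ℝ) (B : ℕ), 0 ≤ C ∧ 0 ≤ A ∧ ∀ (k : ℕ) (y : RV n),
      ‖conv f (fam n a ψ0 ψ k) y‖ ≤ C * (2:ℝ)^((k:ℝ) * A) * (∏ l, (1 + |y l|))^B := by
  obtain ⟨S, C, hC, hf⟩ := func_bound (fj a 0 f)
  choose D1 hD1 hb1 using fun i : ℕ × ℕ => Sc_bd ha (toV ψ) i.1 i.2
  choose D0 hD0 hb0 using fun i : ℕ × ℕ => one_add_bound (toV ψ0) i.1 i.2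
  have hA0 : 0 ≤ ∑ i, a i := Finset.sum_nonneg fun i _ => by linarith [ha i]
  have hG : ∀ (i : ℕ × ℕ) (m : ℕ) (x : EV n), (1+‖x‖)^i.1 * ‖iteratedFDeriv ℝ i.2 (Gm a ψ0 ψ m) x‖ ≤ (D0 i + D1 i) * (2:ℝ)^((m:ℝ) * ((∑ i, a i) * (1+i.2))) := by
    intro i m x
    cases m with
    | zero =>
      refine (hb0 i x).trans ?_
      simp only [Nat.cast_zero, zero_mul, Real.rpow_zero, mul_one]
      linarith [hD1 i]
    | succ m =>
      refine (hb1 i (m+1) x).trans ?_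
      gcongr
      linarith [hD0 i]
  obtain ⟨B, hB⟩ : ∃ B : ℕ, ∀ i ∈ S, i.1 ≤ B := ⟨S.sup Prod.fst, fun i hi => Finset.le_sup (f := Prod.fst) hi⟩
  obtain ⟨Q, hQ⟩ : ∃ B : ℕ, ∀ i ∈ S, i.2 ≤ B := ⟨S.sup Prod.snd, fun i hi => Finset.le_sup (f := Prod.snd) hi⟩
  refine ⟨C * ∑ i ∈ S, (D0 i + D1 i), (∑ i, a i) * (1+Q), B, mul_nonneg hC (Finset.sum_nonneg fun i _ => add_nonneg (hD0 i) (hD1 i)), by positivity, ?_⟩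
  intro k y
  have h1 := conv_fj a conv hconv ψ0 ψ f 0 k (WithLp.toLp 2 y)
  rw [Nat.zero_add, if_pos rfl, Nat.cast_zero, dil_zero] at h1
  have h2 : conv f (fam n a ψ0 ψ k) y = fj a 0 f (Rr (WithLp.toLp 2 y) (Gm a ψ0 ψ k)) := h1
  rw [h2]
  refine (hf _).trans ?_
  rw [mul_assoc, mul_assoc, Finset.sum_mul]
  gcongr with i hi
  have hD := add_nonneg (hD0 i) (hD1 i)
  refine (Rr_bd (Gm a ψ0 ψ k) i.1 i.2 (mul_nonneg hD (by positivity)) (hG i k) _).trans ?_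
  rw [mul_comm, mul_assoc]
  have hP := norm_le_wt y
  refine mul_le_mul_of_nonneg_left ?_ hD
  refine mul_le_mul ?_ ?_ (by positivity) (by positivity)
  · apply Real.rpow_le_rpow_of_exponent_le one_le_two
    have := hQ i hi
    gcongr
  · calc (1+‖(WithLp.toLp 2 y : EV n)‖)^i.1 ≤ (1+‖(WithLp.toLp 2 y : EV n)‖)^B :=
          pow_le_pow_right₀ (le_add_of_nonneg_right (norm_nonneg _)) (hB i hi)
      _ ≤ _ := by gcongr
end HH
end S14

set_option linter.unusedSectionVars false
namespace S14
open SchwartzMap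
open scoped FourierTransform LineDeriv

section RR
variable {n : ℕ}

def Wi (a : Fin n → ℝ) (k : ℕ) (s : Fin n → ℝ) (x : RV n) : ℝ≥0∞ := ENNReal.ofReal ((wt a (k:ℝ) s x)⁻¹)
def pw (m : ℕ) (N : ℝ) : ℝ≥0∞ := ENNReal.ofReal ((2:ℝ)^(-((m:ℝ)*N)))
def Dk (a : Fin n → ℝ) (k : ℕ) : ℝ≥0∞ := ENNReal.ofReal ((2:ℝ)^((k:ℝ) * ∑ i, a i))
def GG (a : Fin n → ℝ) (F : ℕ → RV n → ℝ≥0∞) (N : ℝ) (r : Fin n → ℝ) (j : ℕ) (x : RV n) (m : ℕ) (z : RV n) : ℝ≥0∞ :=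
  pw m N * (F (j+m) z * Wi a (j+m) r (x - z))
def SS (a : Fin n → ℝ) (F : ℕ → RV n → ℝ≥0∞) (N : ℝ) (r : Fin n → ℝ) (τ : ℝ) (j : ℕ) (x : RV n) : ℝ≥0∞ :=
  ∑' m : ℕ, ∫⁻ z : RV n, Dk a (j+m) * GG a F N r j x m z ^ τ

lemma Wi_ne_top (a : Fin n → ℝ) (k : ℕ) (s : Fin n → ℝ) (x : RV n) : Wi a k s x ≠ ⊤ := ENNReal.ofReal_ne_top
lemma pw_ne_top (m : ℕ) (N : ℝ) : pw m N ≠ ⊤ := ENNReal.ofReal_ne_top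
lemma Dk_ne_top (a : Fin n → ℝ) (k : ℕ) : Dk a k ≠ ⊤ := ENNReal.ofReal_ne_top

lemma pw_zero (N : ℝ) : pw 0 N = 1 := by simp [pw]

lemma pw_add (m m' : ℕ) (N : ℝ) : pw (m+m') N = pw m N * pw m' N := by
  unfold pw
  rw [← ENNReal.ofReal_mul (by positivity), ← Real.rpow_add two_pos]
  congr 2; push_cast; ring

lemma pw_add' (m : ℕ) (N N' : ℝ) : pw m (N+N') = pw m N * pw m N' := by
  unfold pw
  rw [← ENNReal.ofReal_mul (by positivity), ← Real.rpow_add two_pos]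
  congr 2; ring

lemma Wi_add (a : Fin n → ℝ) (k : ℕ) (s t : Fin n → ℝ) (x : RV n) :
    Wi a k (fun l => s l + t l) x = Wi a k s x * Wi a k t x := by
  unfold Wi
  have := wt_pos a k s x
  rw [← ENNReal.ofReal_mul (by positivity), wt_add, mul_inv]

lemma Wi_le_one (a : Fin n → ℝ) (k : ℕ) {s : Fin n → ℝ} (hs : ∀ l, 0 ≤ s l) (x : RV n) : Wi a k s x ≤ 1 :=
  ENNReal.ofReal_le_one.2 (inv_le_one_of_one_le₀ (wt_one a k hs x))

lemma Wi_anti (a : Fin n → ℝ) (k : ℕ) {s t : Fin n → ℝ} (hst : ∀ l, s l ≤ t l) (x : RV n) : Wi a k t x ≤ Wi a k s x :=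
  ENNReal.ofReal_le_ofReal (inv_anti₀ (wt_pos a k s x) (wt_mono_s a k hst x))

lemma Wi_zero (a : Fin n → ℝ) (k : ℕ) (s : Fin n → ℝ) : Wi a k s 0 = 1 := by
  simp [Wi, wt]

/-- key pointwise inequality -/
lemma KP {a : Fin n → ℝ} (ha : ∀ i, 1 ≤ a i) {r : Fin n → ℝ} (hr : ∀ l, 0 ≤ r l) {N N0 : ℝ}
    (hN : N + ∑ l, a l * r l ≤ N0) (k m : ℕ) (x y z : RV n) :
    pw m N0 * Wi a (k+m) r (y - z) * Wi a k r (x - y) ≤ pw m N * Wi a (k+m) r (x - z) := by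
  unfold pw Wi
  have w1 := wt_pos a ((k+m:ℕ):ℝ) r (y-z)
  have w2 := wt_pos a (k:ℝ) r (x-y)
  have w3 := wt_pos a ((k+m:ℕ):ℝ) r (x-z)
  rw [← ENNReal.ofReal_mul (by positivity), ← ENNReal.ofReal_mul (by positivity), ← ENNReal.ofReal_mul (by positivity)]
  apply ENNReal.ofReal_le_ofReal
  have h1 := wt_tri a ((k+m:ℕ):ℝ) hr x y z
  have h2 := wt_shift ha (k:ℝ) (m := (m:ℝ)) (by positivity) hr (x-y)
  rw [← Nat.cast_add] at h2
  have h3 : (2:ℝ)^(-((m:ℝ)*N0)) * (2:ℝ)^((m:ℝ) * ∑ l, a l * r l) ≤ (2:ℝ)^(-((m:ℝ)*N)) := by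
    rw [← Real.rpow_add two_pos]
    apply Real.rpow_le_rpow_of_exponent_le one_le_two
    have : (0:ℝ) ≤ m := by positivity
    nlinarith
  rw [← div_eq_mul_inv, ← div_eq_mul_inv, ← div_eq_mul_inv, div_div, div_le_div_iff₀ (by positivity) w3]
  calc (2:ℝ)^(-((m:ℝ)*N0)) * wt a ((k+m:ℕ):ℝ) r (x-z)
      ≤ (2:ℝ)^(-((m:ℝ)*N0)) * (((2:ℝ)^((m:ℝ) * ∑ l, a l * r l) * wt a k r (x-y)) * wt a ((k+m:ℕ):ℝ) r (y-z)) := by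
        gcongr
        exact h1.trans (by gcongr)
    _ = ((2:ℝ)^(-((m:ℝ)*N0)) * (2:ℝ)^((m:ℝ) * ∑ l, a l * r l)) * (wt a ((k+m:ℕ):ℝ) r (y-z) * wt a k r (x-y)) := by ring
    _ ≤ _ := by gcongr

/-- shift of GG -/
lemma GG_shift (a : Fin n → ℝ) (F : ℕ → RV n → ℝ≥0∞) (N : ℝ) (r : Fin n → ℝ) (j : ℕ) (x : RV n) (m m' : ℕ) (z : RV n) :
    pw m N * GG a F N r (j+m) x m' z = GG a F N r j x (m+m') z := by
  unfold GG
  rw [pw_add, add_assoc, mul_assoc]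

lemma GG_le {a : Fin n → ℝ} (ha : ∀ i, 1 ≤ a i) {r s : Fin n → ℝ} (hr : ∀ l, 0 ≤ r l) (hrs : ∀ l, r l ≤ s l) {N N0 : ℝ}
    (hN : N + ∑ l, a l * r l ≤ N0) (F : ℕ → RV n → ℝ≥0∞) (j m m' : ℕ) (x y z : RV n) :
    pw m N * (Wi a (j+m) r (x - y) * GG a F N0 s (j+m) y m' z) ≤ GG a F N r j x (m+m') z := by
  rw [← GG_shift]
  gcongr
  unfold GG
  calc _ ≤ Wi a (j+m) r (x - y) * (pw m' N0 * (F (j+m+m') z * Wi a (j+m+m') r (y - z))) := by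
        gcongr; exact Wi_anti a _ hrs _
    _ = (pw m' N0 * Wi a (j+m+m') r (y - z) * Wi a (j+m) r (x - y)) * F (j+m+m') z := by ring
    _ ≤ (pw m' N * Wi a (j+m+m') r (x - z)) * F (j+m+m') z := mul_le_mul' (KP ha hr hN _ _ _ _ _) le_rfl
    _ = _ := by ring

lemma SS_le {a : Fin n → ℝ} (ha : ∀ i, 1 ≤ a i) {r s : Fin n → ℝ} (hr : ∀ l, 0 ≤ r l) (hrs : ∀ l, r l ≤ s l) {N N0 : ℝ}
    (hN : N + ∑ l, a l * r l ≤ N0) (F : ℕ → RV n → ℝ≥0∞) {τ : ℝ} (hτ : 0 < τ) (j m : ℕ) (x y : RV n) :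
    (pw m N * Wi a (j+m) r (x - y))^τ * SS a F N0 s τ (j+m) y ≤ SS a F N r τ j x := by
  unfold SS
  rw [← ENNReal.tsum_mul_left]
  refine le_trans (ENNReal.tsum_le_tsum fun m' => ?_)
    (ENNReal.tsum_comp_le_tsum_of_injective (f := fun m' : ℕ => m + m') (fun p q h => by simpa using h) _)
  rw [← lintegral_const_mul' _ _ (by
    exact ENNReal.rpow_ne_top_of_nonneg hτ.le (ENNReal.mul_ne_top (pw_ne_top _ _) (Wi_ne_top _ _ _ _)))]
  refine lintegral_mono fun z => ?_
  rw [mul_left_comm, ← ENNReal.mul_rpow_of_nonneg _ _ hτ.le, mul_assoc (pw m N), ← add_assoc]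
  gcongr
  exact GG_le ha hr hrs hN F j m m' x y z

theorem R1 {a : Fin n → ℝ} (ha : ∀ i, 1 ≤ a i) {r q : Fin n → ℝ} (hr : ∀ l, 0 ≤ r l) {N : ℝ}
    (F : ℕ → RV n → ℝ≥0∞) (C : ℝ≥0∞)
    (H : ∀ j y, F j y ≤ C * ∑' m : ℕ, pw m (N + ∑ l, a l * r l) * ∫⁻ z : RV n, Dk a (j+m) * F (j+m) z * Wi a (j+m) (fun l => r l + q l) (y - z))
    (j m : ℕ) (x y : RV n) :
    GG a F N r j x m y ≤ C * ∑' m' : ℕ, ∫⁻ z : RV n, Dk a (j+m') * GG a F N r j x m' z * Wi a (j+m') q (y - z) := by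
  calc GG a F N r j x m y = (pw m N * Wi a (j+m) r (x - y)) * F (j+m) y := by unfold GG; ring
    _ ≤ (pw m N * Wi a (j+m) r (x - y)) * (C * ∑' m' : ℕ, pw m' (N + ∑ l, a l * r l) * ∫⁻ z : RV n, Dk a (j+m+m') * F (j+m+m') z * Wi a (j+m+m') (fun l => r l + q l) (y - z)) := by
        gcongr; exact H _ _
    _ = C * ∑' m' : ℕ, (pw m N * Wi a (j+m) r (x - y)) * (pw m' (N + ∑ l, a l * r l) * ∫⁻ z : RV n, Dk a (j+m+m') * F (j+m+m') z * Wi a (j+m+m') (fun l => r l + q l) (y - z)) := by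
        rw [ENNReal.tsum_mul_left]; ring
    _ ≤ C * ∑' m' : ℕ, ∫⁻ z : RV n, Dk a (j+(m+m')) * GG a F N r j x (m+m') z * Wi a (j+(m+m')) q (y - z) := by
        refine mul_le_mul' le_rfl (ENNReal.tsum_le_tsum fun m' => ?_)
        rw [← mul_assoc, ← lintegral_const_mul' _ _ (ENNReal.mul_ne_top (ENNReal.mul_ne_top (pw_ne_top _ _) (Wi_ne_top _ _ _ _)) (pw_ne_top _ _))]
        refine lintegral_mono fun z => ?_
        rw [Wi_add, ← add_assoc]
        have := GG_le ha hr (fun l => le_refl (r l)) (le_refl (N + ∑ l, a l * r l)) F j m m' x y z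
        calc _ = Dk a (j+m+m') * (pw m N * (Wi a (j+m) r (x - y) * GG a F (N + ∑ l, a l * r l) r (j+m) y m' z)) * Wi a (j+m+m') q (y - z) := by
              unfold GG; ring
          _ ≤ _ := by gcongr
    _ ≤ _ := by
        refine mul_le_mul' le_rfl ?_
        exact ENNReal.tsum_comp_le_tsum_of_injective (f := fun m' : ℕ => m + m') (fun p q h => by simpa using h)
          (fun m' => ∫⁻ z : RV n, Dk a (j+m') * GG a F N r j x m' z * Wi a (j+m') q (y - z))

def q0 (n : ℕ) : Fin n → ℝ := fun _ => (n:ℝ) + 1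

lemma Kint (a : Fin n → ℝ) : ∃ K : ℝ≥0∞, K ≠ ⊤ ∧ ∀ (k : ℕ) (y : RV n), ∫⁻ z : RV n, Dk a k * Wi a k (q0 n) (y - z) ≤ K := by
  refine ⟨∫⁻ z : EV n, ENNReal.ofReal ((1+‖z‖)^(-((n:ℝ)+1))), ?_, fun k y => ?_⟩
  · refine (finite_integral_one_add_norm (μ := (volume : Measure (EV n))) (r := (n:ℝ)+1) ?_).ne
    simp
  · rw [lintegral_const_mul' _ _ (Dk_ne_top _ _), lintegral_sub_left_eq_self (fun z => Wi a k (q0 n) z) y, ← V_lintegral,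
      dil_lintegral a k (fun z => ENNReal.ofReal ((1+‖z‖)^(-((n:ℝ)+1)))) ]
    unfold Dk
    refine mul_le_mul' le_rfl (lintegral_mono fun z => ?_)
    apply ENNReal.ofReal_le_ofReal
    rw [Real.rpow_neg (by positivity)]
    have h1 := norm_le_wt (fun i => dil a k z i)
    have e : wt a (k:ℝ) (q0 n) (fun i => z i) = (∏ l, (1 + |dil a k z l|)) ^ ((n:ℝ)+1) := by
      unfold wt q0
      rw [Real.finsetProd_rpow _ _ (fun i _ => by positivity)]
      congr 1
      refine Finset.prod_congr rfl fun l _ => ?_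
      rw [dil_apply, abs_mul, abs_of_pos (Real.rpow_pos_of_pos two_pos _)]
    rw [e]
    refine inv_anti₀ (by positivity) ?_
    exact Real.rpow_le_rpow (by positivity) h1 (by positivity)
end RR
end S14

set_option linter.unusedSectionVars false
namespace S14
open SchwartzMap
open scoped FourierTransform LineDeriv

section RR2
variable {n : ℕ}

lemma abs_M {M X : ℝ≥0∞} {τ : ℝ} (hτ : 0 < τ) (hM : M ≠ ⊤) (h : M ≤ X * M^(1-τ)) : M^τ ≤ X := by
  by_cases h0 : M = 0
  · simp [h0, hτ]
  calc M^τ = M * M^(τ-1) := by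
        conv_rhs => enter [1]; rw [← ENNReal.rpow_one M]
        rw [← ENNReal.rpow_add _ _ h0 hM]; congr 1; ring
    _ ≤ X * M^(1-τ) * M^(τ-1) := by gcongr
    _ = X := by rw [mul_assoc, ← ENNReal.rpow_add _ _ h0 hM]; simp

lemma le_split {g M : ℝ≥0∞} {τ : ℝ} (hτ : 0 < τ) (hτ1 : τ ≤ 1) (hg : g ≤ M) : g ≤ M^(1-τ) * g^τ := by
  calc g = g^(1-τ) * g^τ := by
        rw [← ENNReal.rpow_add_of_nonneg _ _ (by linarith) hτ.le]; simp
    _ ≤ _ := by gcongr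

lemma le_split2 {g lam : ℝ≥0∞} {τ : ℝ} (hτ : 1 ≤ τ) (h0 : lam ≠ 0) (ht : lam ≠ ⊤) : g ≤ lam + (lam * (lam⁻¹)^τ) * g^τ := by
  rcases le_total g lam with h | h
  · exact h.trans le_self_add
  · refine le_add_left ?_
    have h1 : 1 ≤ lam⁻¹ * g := by
      rw [← ENNReal.inv_mul_cancel h0 ht]; gcongr
    calc g = lam * (lam⁻¹ * g)^(1:ℝ) := by rw [ENNReal.rpow_one, ← mul_assoc, ENNReal.mul_inv_cancel h0 ht, one_mul]
      _ ≤ lam * (lam⁻¹ * g)^τ := by gcongr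
      _ = _ := by rw [ENNReal.mul_rpow_of_nonneg _ _ (by linarith), mul_assoc]

theorem Rlt {a : Fin n → ℝ} (ha : ∀ i, 1 ≤ a i) {r q : Fin n → ℝ} (hr : ∀ l, 0 ≤ r l) (hq : ∀ l, 0 ≤ q l) {N : ℝ}
    (F : ℕ → RV n → ℝ≥0∞) (C : ℝ≥0∞)
    (H : ∀ j y, F j y ≤ C * ∑' m : ℕ, pw m (N + ∑ l, a l * r l) * ∫⁻ z : RV n, Dk a (j+m) * F (j+m) z * Wi a (j+m) (fun l => r l + q l) (y - z))
    {τ : ℝ} (hτ : 0 < τ) (hτ1 : τ ≤ 1) (j : ℕ) (x : RV n) {M0 : ℝ≥0∞} (hM0 : M0 ≠ ⊤)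
    (hM : ∀ m y, GG a F N r j x m y ≤ M0) (m : ℕ) (y : RV n) :
    GG a F N r j x m y ^ τ ≤ C * SS a F N r τ j x := by
  set M := ⨆ m, ⨆ y, GG a F N r j x m y with hMd
  have hle : ∀ m y, GG a F N r j x m y ≤ M := fun m y => le_iSup₂_of_le m y le_rfl
  have hMt : M ≠ ⊤ := ne_top_of_le_ne_top hM0 (iSup₂_le hM)
  have hMt' : M^(1-τ) ≠ ⊤ := ENNReal.rpow_ne_top_of_nonneg (by linarith) hMt
  have key : M ≤ C * SS a F N r τ j x * M^(1-τ) := by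
    refine iSup₂_le fun m y => (R1 ha hr F C H j m x y).trans ?_
    unfold SS
    rw [mul_assoc, ← ENNReal.tsum_mul_right]
    refine mul_le_mul' le_rfl (ENNReal.tsum_le_tsum fun m' => ?_)
    rw [← lintegral_mul_const' _ _ hMt']
    refine lintegral_mono fun z => ?_
    calc _ ≤ Dk a (j+m') * (M^(1-τ) * GG a F N r j x m' z ^ τ) * 1 := by
          gcongr
          · exact le_split hτ hτ1 (hle _ _)
          · exact Wi_le_one a _ hq _
      _ = _ := by ring
  exact (ENNReal.rpow_le_rpow (hle m y) hτ.le).trans (abs_M hτ hMt key)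

lemma pw_sum : ∑' m : ℕ, pw m 1 ≠ ⊤ := by
  have : ∀ m : ℕ, pw m 1 = (2⁻¹ : ℝ≥0∞)^m := by
    intro m
    unfold pw
    rw [mul_one, Real.rpow_neg two_pos.le, Real.rpow_natCast, ENNReal.ofReal_inv_of_pos (by positivity), ENNReal.ofReal_pow two_pos.le]
    simp [ENNReal.inv_pow]
  simp_rw [this]
  rw [ENNReal.tsum_geometric]
  simp

lemma wt_cont (a : Fin n → ℝ) (k : ℝ) (s : Fin n → ℝ) : Continuous (wt a k s) := by
  unfold wt
  refine continuous_finsetProd _ fun l _ => ?_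
  refine Continuous.rpow_const (by fun_prop) fun x => Or.inl (base_pos a k x l).ne'

lemma Wi_meas (a : Fin n → ℝ) (k : ℕ) (s : Fin n → ℝ) (y : RV n) : Measurable fun z => Wi a k s (y - z) := by
  unfold Wi
  refine ENNReal.measurable_ofReal.comp (Measurable.inv ?_)
  exact ((wt_cont a k s).comp (continuous_const.sub continuous_id)).measurable

theorem Rge {a : Fin n → ℝ} (ha : ∀ i, 1 ≤ a i) {r q : Fin n → ℝ} (hr : ∀ l, 0 ≤ r l) (hq : ∀ l, 0 ≤ q l) {N : ℝ}
    (F : ℕ → RV n → ℝ≥0∞) (C K : ℝ≥0∞) (hC : C ≠ ⊤) (hKt : K ≠ ⊤)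
    (hK : ∀ (k : ℕ) (y : RV n), ∫⁻ z : RV n, Dk a k * Wi a k q (y - z) ≤ K)
    (H : ∀ j y, F j y ≤ C * ∑' m : ℕ, pw m (N + 1 + ∑ l, a l * r l) * ∫⁻ z : RV n, Dk a (j+m) * F (j+m) z * Wi a (j+m) (fun l => r l + q l) (y - z))
    {τ : ℝ} (hτ1 : 1 ≤ τ) (j : ℕ) (x y : RV n) (hS : SS a F N r τ j x ≠ ⊤) :
    (F j y * Wi a j r (x - y)) ^ τ ≤ (C * ((∑' m : ℕ, pw m 1) * K + 1))^τ * SS a F N r τ j x := by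
  have hτ : 0 < τ := by linarith
  set S := SS a F N r τ j x with hSd
  set P := ∑' m : ℕ, pw m 1 with hP
  have hPt : P ≠ ⊤ := pw_sum
  have main : ∀ lam : ℝ≥0∞, lam ≠ 0 → lam ≠ ⊤ → S ≤ lam^τ → F j y * Wi a j r (x - y) ≤ C * (P * K + 1) * lam := by
    intro lam h0 ht hSl
    have hct : lam * (lam⁻¹)^τ ≠ ⊤ := ENNReal.mul_ne_top ht (ENNReal.rpow_ne_top_of_nonneg hτ.le (by simpa using h0))
    have h1 := R1 ha hr F C H j 0 x y
    have e0 : GG a F (N+1) r j x 0 y = F j y * Wi a j r (x - y) := by simp [GG, pw_zero]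
    rw [e0] at h1
    refine h1.trans ?_
    have step : ∀ m' : ℕ, ∫⁻ z : RV n, Dk a (j+m') * GG a F (N+1) r j x m' z * Wi a (j+m') q (y - z) ≤
        pw m' 1 * (lam * K) + (lam * (lam⁻¹)^τ) * ∫⁻ z : RV n, Dk a (j+m') * GG a F N r j x m' z ^ τ := by
      intro m'
      have hp1 : pw m' 1 ≤ 1 := by
        unfold pw
        refine ENNReal.ofReal_le_one.2 (Real.rpow_le_one_of_one_le_of_nonpos one_le_two ?_)
        have : (0:ℝ) ≤ m' := by positivity
        linarith
      calc _ ≤ ∫⁻ z : RV n, (pw m' 1 * lam) * (Dk a (j+m') * Wi a (j+m') q (y - z)) + (lam * (lam⁻¹)^τ) * (Dk a (j+m') * GG a F N r j x m' z ^ τ) := by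
            refine lintegral_mono fun z => ?_
            have e1 : GG a F (N+1) r j x m' z = pw m' 1 * GG a F N r j x m' z := by
              unfold GG; rw [pw_add']; ring
            rw [e1]
            calc Dk a (j+m') * (pw m' 1 * GG a F N r j x m' z) * Wi a (j+m') q (y - z)
                ≤ Dk a (j+m') * (pw m' 1 * (lam + (lam * (lam⁻¹)^τ) * GG a F N r j x m' z ^ τ)) * Wi a (j+m') q (y - z) := by
                  gcongr; exact le_split2 hτ1 h0 ht
              _ = (pw m' 1 * lam) * (Dk a (j+m') * Wi a (j+m') q (y - z)) + (lam * (lam⁻¹)^τ) * (Dk a (j+m') * GG a F N r j x m' z ^ τ) * (pw m' 1 * Wi a (j+m') q (y - z)) := by ring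
              _ ≤ (pw m' 1 * lam) * (Dk a (j+m') * Wi a (j+m') q (y - z)) + (lam * (lam⁻¹)^τ) * (Dk a (j+m') * GG a F N r j x m' z ^ τ) * (1 * 1) := by
                  gcongr; exact Wi_le_one a _ hq _
              _ = _ := by ring
        _ = (pw m' 1 * lam) * (∫⁻ z : RV n, Dk a (j+m') * Wi a (j+m') q (y - z)) + (lam * (lam⁻¹)^τ) * ∫⁻ z : RV n, Dk a (j+m') * GG a F N r j x m' z ^ τ := by
            rw [lintegral_add_left (((Wi_meas a _ q y).const_mul _).const_mul _), lintegral_const_mul' _ _ (ENNReal.mul_ne_top (pw_ne_top _ _) ht), lintegral_const_mul' _ _ hct]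
        _ ≤ (pw m' 1 * lam) * K + (lam * (lam⁻¹)^τ) * ∫⁻ z : RV n, Dk a (j+m') * GG a F N r j x m' z ^ τ := by
            gcongr; exact hK _ _
        _ = _ := by ring
    calc _ ≤ C * ∑' m' : ℕ, (pw m' 1 * (lam * K) + (lam * (lam⁻¹)^τ) * ∫⁻ z : RV n, Dk a (j+m') * GG a F N r j x m' z ^ τ) :=
          mul_le_mul' le_rfl (ENNReal.tsum_le_tsum step)
      _ = C * (P * (lam * K) + (lam * (lam⁻¹)^τ) * S) := by
          rw [ENNReal.tsum_add, ENNReal.tsum_mul_right, ENNReal.tsum_mul_left]; rfl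
      _ ≤ C * (P * (lam * K) + (lam * (lam⁻¹)^τ) * lam^τ) := by gcongr
      _ = C * (P * (lam * K) + lam * (lam⁻¹ * lam)^τ) := by rw [mul_assoc lam, ← ENNReal.mul_rpow_of_nonneg _ _ hτ.le]
      _ = _ := by rw [ENNReal.inv_mul_cancel h0 ht, ENNReal.one_rpow]; ring
  have main2 : ∀ mu : ℝ≥0∞, mu ≠ 0 → mu ≠ ⊤ → (F j y * Wi a j r (x - y))^τ ≤ (C * (P * K + 1))^τ * (S + mu) := by
    intro mu h0 ht
    have h0' : S + mu ≠ 0 := by simp [h0]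
    have ht' : S + mu ≠ ⊤ := ENNReal.add_ne_top.2 ⟨hS, ht⟩
    have e : ((S + mu)^(1/τ))^τ = S + mu := by rw [← ENNReal.rpow_mul]; simp [hτ.ne']
    have := main ((S+mu)^(1/τ)) (by rw [Ne, ENNReal.rpow_eq_zero_iff]; push Not; exact ⟨fun h => absurd h h0', fun h => absurd h ht'⟩)
      (ENNReal.rpow_ne_top_of_nonneg (by positivity) ht') (by rw [e]; exact le_self_add)
    have := ENNReal.rpow_le_rpow this hτ.le
    rwa [ENNReal.mul_rpow_of_nonneg (C * (P * K + 1)) _ hτ.le, e] at this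
  have hCt : (C * (P * K + 1))^τ ≠ ⊤ := ENNReal.rpow_ne_top_of_nonneg hτ.le
    (ENNReal.mul_ne_top hC (ENNReal.add_ne_top.2 ⟨ENNReal.mul_ne_top hPt hKt, ENNReal.one_ne_top⟩))
  have lim : Filter.Tendsto (fun k : ℕ => (C * (P * K + 1))^τ * (S + (k:ℝ≥0∞)⁻¹)) Filter.atTop (nhds ((C * (P * K + 1))^τ * (S + 0))) :=
    ENNReal.Tendsto.const_mul (tendsto_const_nhds.add ENNReal.tendsto_inv_nat_nhds_zero) (Or.inr hCt)
  rw [add_zero] at lim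
  refine ge_of_tendsto lim ?_
  filter_upwards [Filter.eventually_gt_atTop 0] with k hk
  exact main2 _ (by simp) (by simp; omega)

theorem Rall {a : Fin n → ℝ} (ha : ∀ i, 1 ≤ a i) (FF : Set (ℕ → RV n → ℝ≥0∞))
    (H1 : ∀ (L : ℝ) (s : Fin n → ℝ), (∀ l, 0 ≤ s l) → ∃ C : ℝ≥0∞, C ≠ ⊤ ∧ ∀ F ∈ FF, ∀ j y,
      F j y ≤ C * ∑' m : ℕ, pw m L * ∫⁻ z : RV n, Dk a (j+m) * F (j+m) z * Wi a (j+m) s (y - z))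
    (H2 : ∀ F ∈ FF, ∃ (C A : ℝ) (B : ℕ), 0 ≤ C ∧ 0 ≤ A ∧ ∀ (k : ℕ) (y : RV n),
      F k y ≤ ENNReal.ofReal (C * (2:ℝ)^((k:ℝ) * A) * (∏ l, (1 + |y l|))^B))
    {N : ℝ} {r : Fin n → ℝ} (hr : ∀ l, 0 < r l) {τ : ℝ} (hτ : 0 < τ) :
    ∃ C : ℝ≥0∞, C ≠ ⊤ ∧ ∀ F ∈ FF, ∀ j x y, (F j y * Wi a j r (x - y))^τ ≤ C * SS a F N r τ j x := by
  have hq : ∀ l, 0 ≤ q0 n l := fun l => by unfold q0; positivity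
  have hr' : ∀ l, 0 ≤ r l := fun l => (hr l).le
  obtain ⟨K, hKt, hK⟩ := Kint a
  rcases le_total 1 τ with h1 | h1
  · obtain ⟨C, hC, hF⟩ := H1 (N + 1 + ∑ l, a l * r l) (fun l => r l + q0 n l) (fun l => add_nonneg (hr' l) (hq l))
    have ht : (C * ((∑' m : ℕ, pw m 1) * K + 1))^τ ≠ ⊤ := ENNReal.rpow_ne_top_of_nonneg hτ.le
      (ENNReal.mul_ne_top hC (ENNReal.add_ne_top.2 ⟨ENNReal.mul_ne_top pw_sum hKt, ENNReal.one_ne_top⟩))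
    refine ⟨(C * ((∑' m : ℕ, pw m 1) * K + 1))^τ + 1, ENNReal.add_ne_top.2 ⟨ht, ENNReal.one_ne_top⟩, fun F hFF j x y => ?_⟩
    by_cases hS : SS a F N r τ j x = ⊤
    · rw [hS, ENNReal.mul_top (by simp)]; exact le_top
    · refine (Rge ha hr' hq F C K hC hKt hK (hF F hFF) h1 j x y hS).trans ?_
      gcongr; exact le_self_add
  · obtain ⟨C, hC, hF⟩ := H1 (N + ∑ l, a l * r l) (fun l => r l + q0 n l) (fun l => add_nonneg (hr' l) (hq l))
    refine ⟨C + 1, ENNReal.add_ne_top.2 ⟨hC, ENNReal.one_ne_top⟩, fun F hFF j x y => ?_⟩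
    by_cases hS : SS a F N r τ j x = ⊤
    · rw [hS, ENNReal.mul_top (by simp)]; exact le_top
    obtain ⟨Cf, A, B, hCf, hA, hFb⟩ := H2 F hFF
    set N0 := max A (N + ∑ l, a l * r l) with hN0
    set r0 : Fin n → ℝ := fun l => max (r l) B with hr0
    have hr0' : ∀ l, 0 ≤ r0 l := fun l => le_max_of_le_left (hr' l)
    obtain ⟨C', hC', hF'⟩ := H1 (N0 + ∑ l, a l * r0 l) (fun l => r0 l + q0 n l) (fun l => add_nonneg (hr0' l) (hq l))
    have fin0 : ∀ k y m z, GG a F N0 r0 k y m z ≤ ENNReal.ofReal (Cf * (2:ℝ)^((k:ℝ) * A) * (∏ l, (1 + |y l|))^B) := by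
      intro k y m z
      unfold GG
      refine (mul_le_mul' le_rfl (mul_le_mul' (hFb (k+m) z) le_rfl)).trans ?_
      unfold pw Wi
      have hw := wt_pos a ((k+m:ℕ):ℝ) r0 (y-z)
      have hPz : 0 ≤ ∏ l, (1 + |z l|) := Finset.prod_nonneg fun l _ => by positivity
      have hPy : 0 ≤ ∏ l, (1 + |y l|) := Finset.prod_nonneg fun l _ => by positivity
      rw [← ENNReal.ofReal_mul (by positivity), ← ENNReal.ofReal_mul (by positivity)]
      apply ENNReal.ofReal_le_ofReal
      have b1 : (∏ l, (1 + |y l - z l|))^B ≤ wt a ((k+m:ℕ):ℝ) r0 (y-z) := by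
        unfold wt
        rw [← Finset.prod_pow]
        refine Finset.prod_le_prod (fun l _ => by positivity) fun l _ => ?_
        rw [← Real.rpow_natCast]
        have hb : 1 + |y l - z l| ≤ 1 + (2:ℝ)^(((k+m:ℕ):ℝ) * a l) * |(y - z) l| := by
          have : (1:ℝ) ≤ (2:ℝ)^(((k+m:ℕ):ℝ) * a l) := Real.one_le_rpow one_le_two (mul_nonneg (by positivity) (by linarith [ha l]))
          rw [Pi.sub_apply]
          nlinarith [abs_nonneg (y l - z l)]
        exact (Real.rpow_le_rpow (by positivity) hb (by positivity)).trans
          (Real.rpow_le_rpow_of_exponent_le (base_one a _ _ l) (le_max_right _ _))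
      have b2 : (∏ l, (1 + |z l|)) ≤ (∏ l, (1 + |y l|)) * ∏ l, (1 + |y l - z l|) := by
        rw [← Finset.prod_mul_distrib]
        refine Finset.prod_le_prod (fun l _ => by positivity) fun l _ => ?_
        have : |z l| ≤ |y l| + |y l - z l| := by
          have := abs_sub (y l) (y l - z l)
          simpa using this
        nlinarith [abs_nonneg (y l), abs_nonneg (y l - z l), mul_nonneg (abs_nonneg (y l)) (abs_nonneg (y l - z l))]
      have b3 : (∏ l, (1 + |z l|))^B ≤ (∏ l, (1 + |y l|))^B * wt a ((k+m:ℕ):ℝ) r0 (y-z) := by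
        refine (pow_le_pow_left₀ hPz b2 B).trans ?_
        rw [mul_pow]; gcongr
      have b4 : (2:ℝ)^(-((m:ℝ)*N0)) * (2:ℝ)^(((k+m:ℕ):ℝ) * A) ≤ (2:ℝ)^((k:ℝ) * A) := by
        rw [← Real.rpow_add two_pos]
        apply Real.rpow_le_rpow_of_exponent_le one_le_two
        have : (0:ℝ) ≤ m := by positivity
        have h5 : A ≤ N0 := le_max_left _ _
        push_cast
        nlinarith
      rw [← mul_assoc, ← div_eq_mul_inv, div_le_iff₀ hw]
      calc (2:ℝ)^(-((m:ℝ)*N0)) * (Cf * (2:ℝ)^(((k+m:ℕ):ℝ) * A) * (∏ l, (1 + |z l|))^B)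
          = Cf * ((2:ℝ)^(-((m:ℝ)*N0)) * (2:ℝ)^(((k+m:ℕ):ℝ) * A)) * (∏ l, (1 + |z l|))^B := by ring
        _ ≤ Cf * (2:ℝ)^((k:ℝ) * A) * ((∏ l, (1 + |y l|))^B * wt a ((k+m:ℕ):ℝ) r0 (y-z)) := by gcongr
        _ = _ := by ring
    have hFk : ∀ k y, F k y ^ τ ≤ C' * SS a F N0 r0 τ k y := by
      intro k y
      have := Rlt ha hr0' hq F C' (hF' F hFF) hτ h1 k y ENNReal.ofReal_ne_top (fin0 k y) 0 y
      simpa [GG, pw_zero, Wi_zero] using this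
    have hfin : ∀ m y, GG a F N r j x m y ≤ (C' * SS a F N r τ j x)^(1/τ) := by
      intro m y
      have e : GG a F N r j x m y ^ τ = (pw m N * Wi a (j+m) r (x - y))^τ * F (j+m) y ^ τ := by
        rw [← ENNReal.mul_rpow_of_nonneg _ _ hτ.le]; unfold GG; congr 1; ring
      have : GG a F N r j x m y ^ τ ≤ C' * SS a F N r τ j x := by
        rw [e]
        calc _ ≤ (pw m N * Wi a (j+m) r (x - y))^τ * (C' * SS a F N0 r0 τ (j+m) y) := by gcongr; exact hFk _ _
          _ = C' * ((pw m N * Wi a (j+m) r (x - y))^τ * SS a F N0 r0 τ (j+m) y) := by ring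
          _ ≤ _ := mul_le_mul' le_rfl (SS_le ha hr' (fun l => le_max_left _ _) (le_max_right _ _) F hτ j m x y)
      rw [one_div, ENNReal.le_rpow_inv_iff hτ]
      exact this
    have := Rlt ha hr' hq F C (hF F hFF) hτ h1 j x (ENNReal.rpow_ne_top_of_nonneg (by positivity) (ENNReal.mul_ne_top hC' hS)) hfin 0 y
    simp only [GG, pw_zero, add_zero, one_mul] at this
    refine this.trans ?_
    gcongr; exact le_self_add
end RR2
end S14

set_option linter.unusedSectionVars false
namespace S14
open SchwartzMap
open scoped FourierTransform LineDeriv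

section Fin
variable {n : ℕ}

lemma div_Wi (a : Fin n → ℝ) (k : ℕ) (s : Fin n → ℝ) (x : RV n) (c : ℝ≥0∞) :
    c / ENNReal.ofReal (wt a (k:ℝ) s x) = c * Wi a k s x := by
  unfold Wi
  rw [div_eq_mul_inv, ENNReal.ofReal_inv_of_pos (wt_pos a k s x)]

lemma Wi_rpow (a : Fin n → ℝ) (k : ℕ) (r : Fin n → ℝ) {τ : ℝ} (hτ : 0 ≤ τ) (x : RV n) :
    Wi a k (fun l => r l * τ) x = Wi a k r x ^ τ := by
  unfold Wi
  have := wt_pos a k r x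
  rw [ENNReal.ofReal_rpow_of_nonneg (by positivity) hτ, Real.inv_rpow this.le]
  congr 2
  unfold wt
  rw [← Real.finsetProd_rpow _ _ (fun l _ => (Real.rpow_pos_of_pos (base_pos a k x l) _).le)]
  exact Finset.prod_congr rfl fun l _ => Real.rpow_mul (base_pos a k x l).le _ _

lemma SS_eq (a : Fin n → ℝ) (F : ℕ → RV n → ℂ) (N : ℝ) (r : Fin n → ℝ) {τ : ℝ} (hτ : 0 < τ) (j : ℕ) (x : RV n) :
    SS a (fun k z => ‖F k z‖ₑ) N r τ j x ≤ ∑' k : ℕ, if j ≤ k then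
              ENNReal.ofReal ((2:ℝ) ^ (((j:ℝ) - (k:ℝ)) * N * τ)) *
                ∫⁻ z : RV n,
                  ENNReal.ofReal ((2:ℝ) ^ ((k:ℝ) * ∑ i, a i)) *
                    (‖F k z‖₊ : ℝ≥0∞) ^ τ /
                    ∏ l, ENNReal.ofReal
                      ((1 + (2:ℝ) ^ ((k:ℝ) * a l) * |x l - z l|) ^ (r l * τ))
            else 0 := by
  unfold SS
  refine le_trans (ENNReal.tsum_le_tsum fun m => ?_)
    (ENNReal.tsum_comp_le_tsum_of_injective (f := fun m : ℕ => j + m) (fun p q h => by simpa using h) _)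
  rw [if_pos (Nat.le_add_right j m), ← lintegral_const_mul' _ _ ENNReal.ofReal_ne_top]
  refine lintegral_mono fun z => ?_
  apply le_of_eq
  have e1 : ∏ l, ENNReal.ofReal ((1 + (2:ℝ) ^ (((j+m:ℕ):ℝ) * a l) * |x l - z l|) ^ (r l * τ)) =
      ENNReal.ofReal (wt a ((j+m:ℕ):ℝ) (fun l => r l * τ) (x - z)) := by
    unfold wt
    rw [ENNReal.ofReal_prod_of_nonneg (fun l _ => (Real.rpow_pos_of_pos (base_pos a _ (x - z) l) _).le)]
    rfl
  have e2 : ENNReal.ofReal ((2:ℝ) ^ (((j:ℝ) - ((j+m:ℕ):ℝ)) * N * τ)) = pw m N ^ τ := by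
    unfold pw
    rw [ENNReal.ofReal_rpow_of_nonneg (by positivity) hτ.le, ← Real.rpow_mul two_pos.le]
    congr 2; push_cast; ring
  rw [e1, e2, div_Wi, Wi_rpow _ _ _ hτ.le]
  unfold GG Dk
  rw [ENNReal.mul_rpow_of_nonneg _ _ hτ.le, ENNReal.mul_rpow_of_nonneg _ _ hτ.le]
  simp only [enorm_eq_nnnorm]
  ring
end Fin
end S14

/-- Proposition 3.8 (`pointwiseEstimate`). -/
theorem stmt14 (n : ℕ) (hn : 1 ≤ n) (a : Fin n → ℝ) (ha : ∀ i, 1 ≤ a i)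
    (anorm : RV n → ℝ) (h : IsAnorm n a anorm)
    (conv : TD n → (RV n → ℂ) → RV n → ℂ)
    (hconv : ∀ (f : TD n) (g : RV n → ℂ) (x : RV n) (Ψ : SchwartzMap (RV n) ℂ),
      (∀ y, Ψ y = g (x - y)) → conv f g x = f Ψ)
    (ψ0 ψ : SchwartzMap (RV n) ℂ) (ε : ℝ) (hε : 0 < ε)
    (hT : Tauber n anorm (⇑ψ0) (⇑ψ) ε)
    (N : ℝ) (hN : 0 < N) (r : Fin n → ℝ) (hr : ∀ l, 0 < r l) (τ : ℝ) (hτ : 0 < τ) :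
    ∃ C : ℝ, 0 < C ∧
      ∀ f : TD n, ∀ j : ℕ, ∀ x : RV n,
        (pfs n a r (conv f (fam n a (⇑ψ0) (⇑ψ) j)) j x) ^ τ
          ≤ ENNReal.ofReal C *
            ∑' k : ℕ, if j ≤ k then
              ENNReal.ofReal ((2:ℝ) ^ (((j:ℝ) - (k:ℝ)) * N * τ)) *
                ∫⁻ z : RV n,
                  ENNReal.ofReal ((2:ℝ) ^ ((k:ℝ) * ∑ i, a i)) *
                    (‖conv f (fam n a (⇑ψ0) (⇑ψ) k) z‖₊ : ℝ≥0∞) ^ τ /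
                    ∏ l, ENNReal.ofReal
                      ((1 + (2:ℝ) ^ ((k:ℝ) * a l) * |x l - z l|) ^ (r l * τ))
            else 0 := by
  obtain ⟨C, hC, key⟩ := S14.Rall (n := n) ha
    (Set.range fun (f : TD n) (k : ℕ) (z : RV n) => ‖conv f (fam n a (⇑ψ0) (⇑ψ) k) z‖ₑ)
    (by
      intro L s hs
      obtain ⟨C, hC, h1⟩ := S14.H1p ha h conv hconv hε ψ0 ψ hT.2 L s hs
      refine ⟨ENNReal.ofReal C, ENNReal.ofReal_ne_top, ?_⟩
      rintro F ⟨f, rfl⟩ j y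
      refine (h1 f j y).trans (le_of_eq ?_)
      simp only [S14.div_Wi]
      rfl)
    (by
      rintro F ⟨f, rfl⟩
      obtain ⟨C, A, B, hC, hA, hb⟩ := S14.H2p ha conv hconv ψ0 ψ f
      refine ⟨C, A, B, hC, hA, fun k y => ?_⟩
      beta_reduce
      rw [← ofReal_norm]
      exact ENNReal.ofReal_le_ofReal (hb k y))
    (N := N) hr hτ
  refine ⟨C.toReal + 1, by positivity, fun f j x => ?_⟩
  have hle : C ≤ ENNReal.ofReal (C.toReal + 1) := by
    rw [ENNReal.ofReal_add ENNReal.toReal_nonneg zero_le_one, ENNReal.ofReal_toReal hC]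
    exact le_self_add
  refine le_trans ?_ (mul_le_mul' hle (S14.SS_eq a (fun k => conv f (fam n a (⇑ψ0) (⇑ψ) k)) N r hτ j x))
  rw [← ENNReal.le_rpow_inv_iff hτ]
  unfold pfs
  refine iSup_le fun y => ?_
  rw [ENNReal.le_rpow_inv_iff hτ]
  refine le_trans (le_of_eq ?_) (key _ ⟨f, rfl⟩ j x y)
  congr 1
  beta_reduce
  rw [← S14.div_Wi, ← ofReal_norm, ← ENNReal.ofReal_div_of_pos (S14.wt_pos _ _ _ _)]
  rfl
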